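/- arXiv:2212.11371 — 2 statements merged into one kernel-verified Lean document; each statement's English description precedes it below -/
import Mathlib

section
/- The intersection of the Markov spectrum M with the open interval (4√30/7, (16351+720√30)/6409) consists of exactly one point, namely √10, which is therefore an isolated point of M. Moreover, both endpoints 4√30/7 and (16351+720√30)/6409 belong to M. -/
open Filter Set MeasureTheory
open scoped ENNReal

/-- Finite continued fraction `[a 0; a 1, ..., a n]`. -/
noncomputable def cfConv : (ℕ → ℝ) → ℕ → ℝ
  | a, 0 => a 0
  | a, n + 1 => a 0 + 1 / cfConv (fun i => a (i + 1)) n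

/-- Value of the infinite continued fraction `[a 0; a 1, a 2, ...]`,
as the limit of its convergents. -/
noncomputable def cfVal (a : ℕ → ℝ) : ℝ := limUnder atTop (cfConv a)

/-- `λ_k(α) = [α_k; α_{k+1}, ...] + [0; α_{k-1}, α_{k-2}, ...]`. -/
noncomputable def lambdaVal (α : ℤ → ℕ) (k : ℤ) : ℝ :=
  cfVal (fun n => (α (k + n) : ℝ)) +
  cfVal (fun n => if n = 0 then 0 else (α (k - n) : ℝ))

/-- The Markov value `m(α) = sup_{k ∈ ℤ} λ_k(α)`. -/
noncomputable def markovValue (α : ℤ → ℕ) : ℝ := ⨆ k : ℤ, lambdaVal α k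

/-- The Markov spectrum. -/
def markovSpectrum : Set ℝ :=
  { x | ∃ α : ℤ → ℕ, (∀ n, 0 < α n) ∧ BddAbove (range (lambdaVal α)) ∧
      markovValue α = x }

/-- The dimension function `d(t) = dim_H (M ∩ (-∞, t))`. -/
noncomputable def dimFun (t : ℝ) : ℝ≥0∞ := dimH (markovSpectrum ∩ Iio t)

/-! ### Convergence of infinite continued fractions -/

/-- A continued fraction with partial quotients at least `1` has all convergents
between its integer part `a 0` and `a 0 + 1`. -/
lemma cfConv_mem_Icc (n : ℕ) : ∀ a : ℕ → ℝ, (∀ i, 1 ≤ a (i + 1)) →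
    cfConv a n ∈ Icc (a 0) (a 0 + 1) := by
  induction n with
  | zero => intro a _; simp [cfConv]
  | succ n ih =>
    intro a ha
    obtain ⟨h1, -⟩ := ih (fun i => a (i + 1)) (fun i => ha (i + 1))
    have h3 : 1 ≤ cfConv (fun i => a (i + 1)) n := (ha 0).trans h1
    have h4 : 1 / cfConv (fun i => a (i + 1)) n ≤ 1 := by
      rw [div_le_one (by linarith)]; exact h3
    have h5 : 0 ≤ 1 / cfConv (fun i => a (i + 1)) n := by positivity
    simp only [cfConv, mem_Icc]
    constructor <;> linarith

lemma abs_two_step_sub_le {a b x y : ℝ} (hb : 1 ≤ b) (hx : 1 ≤ x) (hy : 1 ≤ y) :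
    |(a + 1 / (b + 1 / x)) - (a + 1 / (b + 1 / y))| ≤ 1 / 4 * |x - y| := by
  have hx0 : x ≠ 0 := by positivity
  have hy0 : y ≠ 0 := by positivity
  have hbx : 2 ≤ b * x + 1 := by nlinarith
  have hby : 2 ≤ b * y + 1 := by nlinarith
  have hprod : 4 ≤ (b * x + 1) * (b * y + 1) := by nlinarith
  have e : (a + 1 / (b + 1 / x)) - (a + 1 / (b + 1 / y))
      = (x - y) / ((b * x + 1) * (b * y + 1)) := by
    field_simp
    ring
  rw [e, abs_div, abs_of_pos (by linarith : 0 < (b * x + 1) * (b * y + 1)),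
    div_le_iff₀ (by linarith)]
  nlinarith [abs_nonneg (x - y)]

lemma abs_cfConv_sub_le (N : ℕ) : ∀ (a : ℕ → ℝ), (∀ i, 1 ≤ a (i + 1)) → ∀ n m : ℕ,
    |cfConv a (2 * N + n) - cfConv a (2 * N + m)| ≤ (1 / 4) ^ N := by
  induction N with
  | zero =>
    intro a ha n m
    have h1 := cfConv_mem_Icc (2 * 0 + n) a ha
    have h2 := cfConv_mem_Icc (2 * 0 + m) a ha
    rw [mem_Icc] at h1 h2
    rw [abs_le]
    constructor <;> norm_num <;> norm_num at h1 h2 <;> linarith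
  | succ N ih =>
    intro a ha n m
    have hshift : ∀ n, 1 ≤ cfConv (fun i => a (i + 1 + 1)) n := fun n =>
      (ha 1).trans (cfConv_mem_Icc n (fun i => a (i + 1 + 1)) (fun i => ha (i + 2))).1
    have e : ∀ n, cfConv a (2 * (N + 1) + n)
        = a 0 + 1 / (a 1 + 1 / cfConv (fun i => a (i + 1 + 1)) (2 * N + n)) := by
      intro n
      rw [show 2 * (N + 1) + n = (2 * N + n) + 1 + 1 by ring]
      simp only [cfConv, zero_add]
    rw [e, e, pow_succ']
    refine (abs_two_step_sub_le (ha 0) (hshift _) (hshift _)).trans ?_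
    have := ih (fun i => a (i + 1 + 1)) (fun i => ha (i + 2)) n m
    linarith

lemma tendsto_cfConv {a : ℕ → ℝ} (ha : ∀ i, 1 ≤ a (i + 1)) :
    Tendsto (cfConv a) atTop (nhds (cfVal a)) := by
  have hc : CauchySeq (cfConv a) := by
    rw [Metric.cauchySeq_iff]
    intro ε hε
    obtain ⟨N, hN⟩ := exists_pow_lt_of_lt_one hε (by norm_num : (1 / 4 : ℝ) < 1)
    refine ⟨2 * N, fun m hm n hn => ?_⟩
    obtain ⟨m', rfl⟩ := Nat.exists_eq_add_of_le hm
    obtain ⟨n', rfl⟩ := Nat.exists_eq_add_of_le hn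
    exact (abs_cfConv_sub_le N a ha m' n').trans_lt hN
  exact tendsto_nhds_limUnder (cauchySeq_tendsto_of_complete hc)

lemma cfVal_mem_Icc {a : ℕ → ℝ} (ha : ∀ i, 1 ≤ a (i + 1)) :
    cfVal a ∈ Icc (a 0) (a 0 + 1) :=
  isClosed_Icc.mem_of_tendsto (tendsto_cfConv ha)
    (Eventually.of_forall fun n => cfConv_mem_Icc n a ha)

lemma cfVal_eq_add {a : ℕ → ℝ} (ha : ∀ i, 1 ≤ a (i + 1)) :
    cfVal a = a 0 + 1 / cfVal (fun i => a (i + 1)) := by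
  have hs : ∀ i, 1 ≤ (fun i => a (i + 1)) (i + 1) := fun i => ha (i + 1)
  have h1 : 1 ≤ cfVal (fun i => a (i + 1)) :=
    (ha 0).trans (cfVal_mem_Icc (a := fun i => a (i + 1)) hs).1
  have h2 : Tendsto (fun n => a 0 + 1 / cfConv (fun i => a (i + 1)) n) atTop
      (nhds (a 0 + 1 / cfVal (fun i => a (i + 1)))) :=
    tendsto_const_nhds.add
      (tendsto_const_nhds.div (tendsto_cfConv hs) (by positivity))
  exact tendsto_nhds_unique ((tendsto_add_atTop_iff_nat 1).2 (tendsto_cfConv ha)) h2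

/-! ### Forward and backward tails of a bi-infinite sequence -/

/-- The forward tail `[0; α_k, α_{k+1}, …]`. -/
noncomputable def fwdTail (α : ℤ → ℕ) (k : ℤ) : ℝ := 1 / cfVal (fun n : ℕ => (α (k + n) : ℝ))

/-- The backward tail `[0; α_k, α_{k-1}, …]`. -/
noncomputable def bwdTail (α : ℤ → ℕ) (k : ℤ) : ℝ := 1 / cfVal (fun n : ℕ => (α (k - n) : ℝ))

lemma fwdTail_congr {α : ℤ → ℕ} {k j : ℤ} (h : ∀ n : ℕ, α (k + n) = α (j + n)) :
    fwdTail α k = fwdTail α j := by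
  simp only [fwdTail, h]

lemma bwdTail_congr {α : ℤ → ℕ} {k j : ℤ} (h : ∀ n : ℕ, α (k - n) = α (j - n)) :
    bwdTail α k = bwdTail α j := by
  simp only [bwdTail, h]

/-- `x` and `y` satisfy the recursions of the forward and the backward tails of `α`. -/
structure TailSystem (α : ℤ → ℕ) (x y : ℤ → ℝ) : Prop where
  one_le : ∀ k, 1 ≤ α k
  fwd_mem : ∀ k, x k ∈ Ioc (0 : ℝ) 1
  bwd_mem : ∀ k, y k ∈ Ioc (0 : ℝ) 1
  fwd_eq : ∀ k, x k = 1 / (α k + x (k + 1))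
  bwd_eq : ∀ k, y k = 1 / (α k + y (k - 1))

lemma tailSystem_tails {α : ℤ → ℕ} (hα : ∀ n, 0 < α n) :
    TailSystem α (fwdTail α) (bwdTail α) := by
  have hα' : ∀ n, (1 : ℝ) ≤ α n := fun n => by exact_mod_cast hα n
  have hf : ∀ k, cfVal (fun n : ℕ => (α (k + n) : ℝ)) = α k + fwdTail α (k + 1) := by
    intro k
    rw [cfVal_eq_add (fun i => hα' _), fwdTail]
    simp only [Nat.cast_zero, add_zero, Nat.cast_add, Nat.cast_one, add_assoc, add_comm (1 : ℤ)]
  have hb : ∀ k, cfVal (fun n : ℕ => (α (k - n) : ℝ)) = α k + bwdTail α (k - 1) := by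
    intro k
    rw [cfVal_eq_add (fun i => hα' _), bwdTail]
    simp only [Nat.cast_zero, sub_zero, Nat.cast_add, Nat.cast_one, sub_sub, add_comm (1 : ℤ)]
  have hf1 : ∀ k, 1 ≤ cfVal (fun n : ℕ => (α (k + n) : ℝ)) := fun k =>
    (hα' _).trans (cfVal_mem_Icc (a := fun n : ℕ => (α (k + n) : ℝ)) (fun i => hα' _)).1
  have hb1 : ∀ k, 1 ≤ cfVal (fun n : ℕ => (α (k - n) : ℝ)) := fun k =>
    (hα' _).trans (cfVal_mem_Icc (a := fun n : ℕ => (α (k - n) : ℝ)) (fun i => hα' _)).1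
  refine ⟨hα, fun k => ?_, fun k => ?_, fun k => ?_, fun k => ?_⟩
  · have := hf1 k
    exact ⟨by unfold fwdTail; positivity, by unfold fwdTail; rw [div_le_one] <;> linarith⟩
  · have := hb1 k
    exact ⟨by unfold bwdTail; positivity, by unfold bwdTail; rw [div_le_one] <;> linarith⟩
  · rw [← hf k, fwdTail]
  · rw [← hb k, bwdTail]

lemma lambdaVal_eq {α : ℤ → ℕ} (hα : ∀ n, 0 < α n) (k : ℤ) :
    lambdaVal α k = α k + fwdTail α (k + 1) + bwdTail α (k - 1) := by
  have hα' : ∀ n, (1 : ℝ) ≤ α n := fun n => by exact_mod_cast hα n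
  unfold lambdaVal
  rw [cfVal_eq_add (fun i => hα' _), cfVal_eq_add (a := fun n : ℕ => if n = 0 then 0 else _)
    (fun i => by simpa using hα' _), fwdTail, bwdTail]
  simp only [Nat.cast_zero, add_zero, Nat.cast_add, Nat.cast_one, add_assoc, add_comm (1 : ℤ),
    sub_sub, if_true, Nat.add_eq_zero_iff, one_ne_zero, and_false, if_false, zero_add]

namespace TailSystem

variable {α : ℤ → ℕ} {x y : ℤ → ℝ}

lemma reverse (h : TailSystem α x y) :
    TailSystem (fun n => α (-n)) (fun n => y (-n)) (fun n => x (-n)) := by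
  refine ⟨fun k => h.one_le _, fun k => h.bwd_mem _, fun k => h.fwd_mem _, fun k => ?_,
    fun k => ?_⟩
  · have := h.bwd_eq (-k)
    rwa [show -k - 1 = -(k + 1) by ring] at this
  · have := h.fwd_eq (-k)
    rwa [show -k + 1 = -(k - 1) by ring] at this

lemma fwd_pos (h : TailSystem α x y) (k : ℤ) : 0 < x k := (h.fwd_mem k).1

lemma bwd_pos (h : TailSystem α x y) (k : ℤ) : 0 < y k := (h.bwd_mem k).1

lemma fwd_of_eq (h : TailSystem α x y) {k : ℤ} {a : ℕ} (ha : α k = a) :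
    x k = 1 / (a + x (k + 1)) := ha ▸ h.fwd_eq k

lemma bwd_of_eq (h : TailSystem α x y) {k : ℤ} {a : ℕ} (ha : α k = a) :
    y k = 1 / (a + y (k - 1)) := ha ▸ h.bwd_eq k

lemma fwd_mem_Icc (h : TailSystem α x y) (h2 : ∀ k, α k ≤ 2) (k : ℤ) :
    x k ∈ Icc (1 / 3 : ℝ) (3 / 4) := by
  have hlow : ∀ k, 1 / 3 ≤ x k := by
    intro k
    have h3 : (α k : ℝ) ≤ 2 := by exact_mod_cast h2 k
    have h4 : (1 : ℝ) ≤ α k := by exact_mod_cast h.one_le k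
    rw [h.fwd_eq k]
    have h5 := h.fwd_mem (k + 1)
    apply one_div_le_one_div_of_le <;> linarith [h5.1, h5.2]
  refine ⟨hlow k, ?_⟩
  have h4 : (1 : ℝ) ≤ α k := by exact_mod_cast h.one_le k
  have h5 := hlow (k + 1)
  rw [h.fwd_eq k, div_le_div_iff₀ (by linarith) (by norm_num)]
  linarith

end TailSystem

/-! ### Arithmetic in `ℚ(√30)` -/

lemma sqrt30_mul_self : √30 * √30 = 30 := Real.mul_self_sqrt (by norm_num)

lemma sqrt30_gt : 5.477 < √30 := by
  rw [Real.lt_sqrt (by norm_num)]; norm_num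

lemma sqrt30_lt : √30 < 5.4773 := by
  rw [Real.sqrt_lt' (by norm_num)]; norm_num

lemma one_div_add_le_one_div_add {a b t : ℝ} (hb : 0 < a + b) (h : b ≤ t) :
    1 / (a + t) ≤ 1 / (a + b) :=
  one_div_le_one_div_of_le hb (by linarith)

/-- `[0; 2, τ] = (2√30 - 8)/7` for `τ = [0; 2, 1, 2, 2, 2, 1, 2, 2, …] = √30/4 - 1`. -/
lemma one_div_two_add_tau : 1 / (2 + (√30 / 4 - 1)) = (2 * √30 - 8) / 7 := by
  have := sqrt30_gt
  rw [div_eq_iff (by linarith)]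
  linear_combination (-(1 / 14)) * sqrt30_mul_self

lemma one_div_two_add_two_tau : 1 / (2 + (2 * √30 - 8) / 7) = (√30 - 3) / 6 := by
  have := sqrt30_gt
  rw [div_eq_iff (by linarith)]
  linear_combination (-(1 / 21)) * sqrt30_mul_self

lemma one_div_one_add_two_two_tau : 1 / (1 + (√30 - 3) / 6) = (2 * √30 - 6) / 7 := by
  have := sqrt30_gt
  rw [div_eq_iff (by linarith)]
  linear_combination (-(1 / 21)) * sqrt30_mul_self

lemma one_div_one_add_one_two_two_tau :
    1 / (1 + (2 * √30 - 6) / 7) = (2 * √30 - 1) / 17 := by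
  have := sqrt30_gt
  rw [div_eq_iff (by linarith)]
  linear_combination (-(4 / 119)) * sqrt30_mul_self

lemma upper_endpoint_eq :
    2 + (2 * √30 - 1) / 17 + (3 + (2 * √30 - 1) / 17) / (5 + 2 * ((2 * √30 - 1) / 17))
      = (16351 + 720 * √30) / 6409 := by
  have := sqrt30_gt
  have e : (3 + (2 * √30 - 1) / 17) / (5 + 2 * ((2 * √30 - 1) / 17)) = (230 - 2 * √30) / 377 := by
    rw [div_eq_iff (by linarith)]
    linear_combination (8 / 6409) * sqrt30_mul_self
  rw [e]
  ring

lemma upper_endpoint_lt : (16351 + 720 * √30) / 6409 < 3.167 := by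
  have := sqrt30_lt
  linarith

lemma lower_endpoint_gt : 3.129 < 4 * √30 / 7 := by
  have := sqrt30_gt
  linarith

/-- The map `A ↦ [0; 1, 1, 2 + A]` decreases more slowly than `A` increases. -/
lemma add_three_add_div_mono {a₀ a b : ℝ} (h₀ : 0 < a₀) (ha : a₀ ≤ a) (hb : a ≤ b) :
    a₀ + (3 + a₀) / (5 + 2 * a₀) ≤ b + (3 + a) / (5 + 2 * a) := by
  have e : (3 + a₀) / (5 + 2 * a₀) - (3 + a) / (5 + 2 * a)
      = (a - a₀) / ((5 + 2 * a₀) * (5 + 2 * a)) := by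
    have : 5 + 2 * a ≠ 0 := by linarith
    field_simp
    ring
  have h1 : (a - a₀) / ((5 + 2 * a₀) * (5 + 2 * a)) ≤ a - a₀ :=
    div_le_self (by linarith) (by nlinarith)
  linarith

lemma three_add_div_anti {a b : ℝ} (ha : 0 < a) (hb : a ≤ b) :
    (3 + b) / (5 + 2 * b) ≤ (3 + a) / (5 + 2 * a) := by
  rw [div_le_div_iff₀ (by linarith) (by linarith)]
  linarith

/-! ### Sequences avoiding `2121` and `1212` -/

/-- A sequence with entries at most `2` avoiding the words `2121` and `1212`. -/
structure AvoidsAlternating (α : ℤ → ℕ) : Prop where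
  le_two : ∀ k, α k ≤ 2
  not_2121 : ∀ k, ¬ (α k = 2 ∧ α (k + 1) = 1 ∧ α (k + 2) = 2 ∧ α (k + 3) = 1)
  not_1212 : ∀ k, ¬ (α k = 1 ∧ α (k + 1) = 2 ∧ α (k + 2) = 1 ∧ α (k + 3) = 2)

lemma AvoidsAlternating.reverse {α : ℤ → ℕ} (h : AvoidsAlternating α) :
    AvoidsAlternating (fun n => α (-n)) := by
  refine ⟨fun k => h.le_two _, fun k hk => h.not_1212 (-(k + 3)) ?_,
    fun k hk => h.not_2121 (-(k + 3)) ?_⟩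
  all_goals
    rw [show -(k + 3) + 1 = -(k + 2) by ring, show -(k + 3) + 2 = -(k + 1) by ring,
      show -(k + 3) + 3 = -k by ring]
    tauto

namespace TailSystem

variable {α : ℤ → ℕ} {x y : ℤ → ℝ}

lemma eq_one_or_eq_two (h : TailSystem α x y) (hα : AvoidsAlternating α) (k : ℤ) :
    α k = 1 ∨ α k = 2 := by
  have := h.one_le k
  have := hα.le_two k
  omega

lemma fwd_one (h : TailSystem α x y) (k : ℤ) {j : ℤ} (ha : α k = 1) (hj : k + 1 = j) :
    x k = 1 / (1 + x j) := by
  subst hj; simpa using h.fwd_of_eq ha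

lemma fwd_two (h : TailSystem α x y) (k : ℤ) {j : ℤ} (ha : α k = 2) (hj : k + 1 = j) :
    x k = 1 / (2 + x j) := by
  subst hj; simpa using h.fwd_of_eq ha

lemma bwd_one (h : TailSystem α x y) (k : ℤ) {j : ℤ} (ha : α k = 1) (hj : k - 1 = j) :
    y k = 1 / (1 + y j) := by
  subst hj; simpa using h.bwd_of_eq ha

lemma bwd_two (h : TailSystem α x y) (k : ℤ) {j : ℤ} (ha : α k = 2) (hj : k - 1 = j) :
    y k = 1 / (2 + y j) := by
  subst hj; simpa using h.bwd_of_eq ha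

lemma fwd_2122 (h : TailSystem α x y) {k : ℤ} (h0 : α k = 2) (h1 : α (k + 1) = 1)
    (h2 : α (k + 2) = 2) (h3 : α (k + 3) = 2) :
    x k = (7 + 3 * x (k + 4)) / (19 + 8 * x (k + 4)) := by
  have := h.fwd_pos (k + 4)
  rw [h.fwd_two k h0 rfl, h.fwd_one (k + 1) h1 (j := k + 2) (by ring),
    h.fwd_two (k + 2) h2 (j := k + 3) (by ring), h.fwd_two (k + 3) h3 (j := k + 4) (by ring)]
  field_simp
  ring

lemma fwd_112 (h : TailSystem α x y) {k : ℤ} (h0 : α k = 1) (h1 : α (k + 1) = 1)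
    (h2 : α (k + 2) = 2) :
    x k = (3 + x (k + 3)) / (5 + 2 * x (k + 3)) := by
  have := h.fwd_pos (k + 3)
  rw [h.fwd_one k h0 rfl, h.fwd_one (k + 1) h1 (j := k + 2) (by ring),
    h.fwd_two (k + 2) h2 (j := k + 3) (by ring)]
  field_simp
  ring

lemma bwd_112 (h : TailSystem α x y) {k : ℤ} (h0 : α k = 1) (h1 : α (k - 1) = 1)
    (h2 : α (k - 2) = 2) :
    y k = (3 + y (k - 3)) / (5 + 2 * y (k - 3)) := by
  have := h.bwd_pos (k - 3)
  rw [h.bwd_one k h0 rfl, h.bwd_one (k - 1) h1 (j := k - 2) (by ring),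
    h.bwd_two (k - 2) h2 (j := k - 3) (by ring)]
  field_simp
  ring

/-- The periodic tail `[0; 2, 1, 2, 2, …]` is extremal among sequences avoiding `2121`. -/
lemma tau_le_fwd (h : TailSystem α x y) (hα : AvoidsAlternating α) (k : ℤ) :
    √30 / 4 - 1 ≤ x k := by
  have hs := sqrt30_gt
  have hs' := sqrt30_lt
  have hss := sqrt30_mul_self
  have step : ∀ e : ℝ, 0 ≤ e → (∀ k, √30 / 4 - 1 - e ≤ x k) →
      ∀ k, √30 / 4 - 1 - 1 / 2 * e ≤ x k := by
    intro e he hx k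
    rcases h.eq_one_or_eq_two hα k with h0 | h0
    · rw [h.fwd_one k h0 rfl, le_div_iff₀ (by linarith [h.fwd_pos (k + 1)])]
      nlinarith [h.fwd_pos (k + 1), (h.fwd_mem (k + 1)).2]
    rcases h.eq_one_or_eq_two hα (k + 1) with h1 | h1
    · rcases h.eq_one_or_eq_two hα (k + 2) with h2 | h2
      · have b2 : 4 / 7 ≤ x (k + 2) := by
          have := h.fwd_mem_Icc hα.le_two (k + 3)
          rw [h.fwd_one (k + 2) h2 (j := k + 3) (by ring), div_le_div_iff₀] <;>
            linarith [this.1, this.2]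
        have b1 : x (k + 1) ≤ 7 / 11 := by
          rw [h.fwd_one (k + 1) h1 (j := k + 2) (by ring), div_le_div_iff₀] <;> linarith
        have b0 : 11 / 29 ≤ x k := by
          have := h.fwd_pos (k + 1)
          rw [h.fwd_two k h0 rfl, div_le_div_iff₀] <;> linarith
        linarith
      · have h3 : α (k + 3) = 2 := by
          rcases h.eq_one_or_eq_two hα (k + 3) with h3 | h3
          · exact absurd ⟨h0, h1, h2, h3⟩ (hα.not_2121 k)
          · exact h3
        have ht := h.fwd_pos (k + 4)
        have hte := hx (k + 4)
        rw [h.fwd_2122 h0 h1 h2 h3, le_div_iff₀ (by linarith)]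
        nlinarith [mul_nonneg he ht.le]
    · have b1 : x (k + 1) ≤ 1 / 2 := by
        have := h.fwd_pos (k + 2)
        rw [h.fwd_two (k + 1) h1 (j := k + 2) (by ring), div_le_div_iff₀] <;> linarith
      have b0 : 2 / 5 ≤ x k := by
        have := h.fwd_pos (k + 1)
        rw [h.fwd_two k h0 rfl, div_le_div_iff₀] <;> linarith
      linarith
  have key : ∀ n : ℕ, ∀ k, √30 / 4 - 1 - (1 / 2) ^ n ≤ x k := by
    intro n
    induction n with
    | zero => intro k; linarith [h.fwd_pos k]
    | succ n ih =>
      intro k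
      have := step _ (by positivity) ih k
      rwa [pow_succ']
  have hlim : Tendsto (fun n : ℕ => √30 / 4 - 1 - (1 / 2 : ℝ) ^ n) atTop
      (nhds (√30 / 4 - 1 - 0)) :=
    tendsto_const_nhds.sub (tendsto_pow_atTop_nhds_zero_of_lt_one (by norm_num) (by norm_num))
  rw [sub_zero] at hlim
  exact le_of_tendsto' hlim fun n => key n k

lemma fwd_eq_tau (h : TailSystem α x y) {k : ℤ} (h0 : α k = 2) (h1 : α (k + 1) = 1)
    (h2 : α (k + 2) = 2) (h3 : α (k + 3) = 2) (hper : x (k + 4) = x k) :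
    x k = √30 / 4 - 1 := by
  have hx := h.fwd_2122 h0 h1 h2 h3
  have hpos := h.fwd_pos k
  rw [hper, eq_div_iff (by linarith)] at hx
  have hs := sqrt30_gt
  have : (x k - (√30 / 4 - 1)) * (x k + √30 / 4 + 1) = 0 := by
    linear_combination (1 / 8) * hx - (1 / 16) * sqrt30_mul_self
  rcases mul_eq_zero.1 this with h | h <;> linarith

lemma bwd_eq_tau (h : TailSystem α x y) {k : ℤ} (h0 : α k = 2) (h1 : α (k - 1) = 1)
    (h2 : α (k - 2) = 2) (h3 : α (k - 3) = 2) (hper : y (k - 4) = y k) :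
    y k = √30 / 4 - 1 := by
  have := h.reverse.fwd_eq_tau (k := -k)
  simp only [neg_add, neg_neg, ← sub_eq_add_neg] at this
  exact this h0 h1 h2 h3 hper

lemma fwd_le_of_two (h : TailSystem α x y) (hα : AvoidsAlternating α) {k : ℤ} (h0 : α k = 2) :
    x k ≤ (2 * √30 - 8) / 7 := by
  rw [h.fwd_two k h0 rfl, ← one_div_two_add_tau]
  exact one_div_add_le_one_div_add (by linarith [sqrt30_gt]) (h.tau_le_fwd hα _)

lemma bwd_le_of_two (h : TailSystem α x y) (hα : AvoidsAlternating α) {k : ℤ} (h0 : α k = 2) :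
    y k ≤ (2 * √30 - 8) / 7 := by
  simpa using h.reverse.fwd_le_of_two hα.reverse (k := -k) (by simpa using h0)

lemma le_fwd_of_one (h : TailSystem α x y) (hα : AvoidsAlternating α) {k : ℤ} (h0 : α k = 1) :
    4 / 7 ≤ x k := by
  have := h.fwd_mem_Icc hα.le_two (k + 1)
  rw [h.fwd_one k h0 rfl, div_le_div_iff₀] <;> linarith [this.1, this.2]

lemma le_bwd_of_one (h : TailSystem α x y) (hα : AvoidsAlternating α) {k : ℤ} (h0 : α k = 1) :
    4 / 7 ≤ y k := by
  simpa using h.reverse.le_fwd_of_one hα.reverse (k := -k) (by simpa using h0)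

/-- A central `2` between a `2` and a `1` contributes at most `4√30/7`. -/
lemma value_le_of_two_two_one (h : TailSystem α x y) (hα : AvoidsAlternating α) {k : ℤ}
    (h0 : α k = 2) (hl : α (k - 1) = 2) (hr : α (k + 1) = 1) :
    2 + x (k + 1) + y (k - 1) ≤ 4 * √30 / 7 := by
  have hs := sqrt30_gt
  have hs' := sqrt30_lt
  have hy := h.bwd_le_of_two hα hl
  suffices hx : x (k + 1) ≤ (2 * √30 - 6) / 7 by linarith
  rw [← one_div_one_add_two_two_tau, h.fwd_one (k + 1) hr (j := k + 2) (by ring)]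
  refine one_div_add_le_one_div_add (by linarith) ?_
  rcases h.eq_one_or_eq_two hα (k + 2) with h2 | h2
  · linarith [h.le_fwd_of_one hα h2]
  · have h3 : α (k + 3) = 2 := by
      rcases h.eq_one_or_eq_two hα (k + 3) with h3 | h3
      · exact absurd ⟨h0, hr, h2, h3⟩ (hα.not_2121 k)
      · exact h3
    rw [← one_div_two_add_two_tau, h.fwd_two (k + 2) h2 (j := k + 3) (by ring)]
    exact one_div_add_le_one_div_add (by linarith [h.fwd_pos (k + 3)]) (h.fwd_le_of_two hα h3)

/-- Only the centre of a word `121` can contribute more than `4√30/7`. -/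
lemma value_le_or_121 (h : TailSystem α x y) (hα : AvoidsAlternating α) (k : ℤ) :
    α k + x (k + 1) + y (k - 1) ≤ 4 * √30 / 7 ∨
      (α k = 2 ∧ α (k - 1) = 1 ∧ α (k + 1) = 1) := by
  have hs := lower_endpoint_gt
  have hs' := sqrt30_lt
  rcases h.eq_one_or_eq_two hα k with h0 | h0
  · left
    have h1 := (h.fwd_mem (k + 1)).2
    have h2 := (h.bwd_mem (k - 1)).2
    rw [h0, Nat.cast_one]
    linarith
  rw [h0, Nat.cast_ofNat]
  rcases h.eq_one_or_eq_two hα (k - 1) with hl | hl <;>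
    rcases h.eq_one_or_eq_two hα (k + 1) with hr | hr
  · exact Or.inr ⟨rfl, hl, hr⟩
  · left
    have := h.reverse.value_le_of_two_two_one hα.reverse (k := -k)
    simp only [neg_add, neg_sub, neg_neg, sub_neg_eq_add, ← sub_eq_add_neg, add_comm 1 k] at this
    linarith [this h0 hr hl]
  · exact Or.inl (h.value_le_of_two_two_one hα h0 hl hr)
  · left
    linarith [h.fwd_le_of_two hα hr, h.bwd_le_of_two hα hl]

lemma le_fwd_of_1122 (h : TailSystem α x y) (hα : AvoidsAlternating α) {k : ℤ}
    (h0 : α k = 1) (h1 : α (k + 1) = 1) (h2 : α (k + 2) = 2) (h3 : α (k + 3) = 2) :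
    (2 * √30 - 1) / 17 ≤ x k := by
  have hs := sqrt30_gt
  have b3 := h.fwd_le_of_two hα h3
  have b2 : (√30 - 3) / 6 ≤ x (k + 2) := by
    rw [← one_div_two_add_two_tau, h.fwd_two (k + 2) h2 (j := k + 3) (by ring)]
    exact one_div_add_le_one_div_add (by linarith [h.fwd_pos (k + 3)]) b3
  have b1 : x (k + 1) ≤ (2 * √30 - 6) / 7 := by
    rw [← one_div_one_add_two_two_tau, h.fwd_one (k + 1) h1 (j := k + 2) (by ring)]
    exact one_div_add_le_one_div_add (by linarith) b2
  rw [← one_div_one_add_one_two_two_tau, h.fwd_one k h0 rfl]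
  exact one_div_add_le_one_div_add (by linarith [h.fwd_pos (k + 1)]) b1

lemma le_bwd_of_1122 (h : TailSystem α x y) (hα : AvoidsAlternating α) {k : ℤ}
    (h0 : α k = 1) (h1 : α (k - 1) = 1) (h2 : α (k - 2) = 2) (h3 : α (k - 3) = 2) :
    (2 * √30 - 1) / 17 ≤ y k := by
  have := h.reverse.le_fwd_of_1122 hα.reverse (k := -k)
  simp only [neg_add, neg_neg, ← sub_eq_add_neg] at this
  exact this h0 h1 h2 h3

lemma bwd_le_of_1121 (h : TailSystem α x y) (hα : AvoidsAlternating α) {k : ℤ}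
    (h0 : α k = 1) (h1 : α (k - 1) = 1) (h2 : α (k - 2) = 2) (h3 : α (k - 3) = 1) :
    y k ≤ (2 * √30 - 1) / 17 := by
  have hs := sqrt30_gt
  have b3 := h.le_bwd_of_one hα h3
  rw [h.bwd_112 h0 h1 h2, div_le_div_iff₀ (by linarith) (by norm_num)]
  nlinarith

/-! ### Sequences with Markov value below the upper endpoint -/

lemma reverse_value_lt {c : ℝ} (hc : ∀ k, α k + x (k + 1) + y (k - 1) < c) (k : ℤ) :
    (α (-k) : ℝ) + y (-(k + 1)) + x (-(k - 1)) < c := by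
  have := hc (-k)
  rw [show -k + 1 = -(k - 1) by ring, show -k - 1 = -(k + 1) by ring] at this
  linarith

lemma le_two_of_lt (h : TailSystem α x y)
    (hU : ∀ k, α k + x (k + 1) + y (k - 1) < (16351 + 720 * √30) / 6409) (k : ℤ) :
    α k ≤ 2 := by
  have hU' := upper_endpoint_lt
  have h3 : ∀ k, α k ≤ 3 := by
    intro k
    by_contra! h4
    have h4' : (4 : ℝ) ≤ α k := by exact_mod_cast h4
    linarith [hU k, h.fwd_pos (k + 1), h.bwd_pos (k - 1)]
  have h3' : ∀ k, (α k : ℝ) ≤ 3 := fun k => by exact_mod_cast h3 k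
  by_contra! h4
  have h4' : (3 : ℝ) ≤ α k := by exact_mod_cast h4
  have hx : 1 / 4 ≤ x (k + 1) := by
    rw [h.fwd_eq (k + 1)]
    have := h.fwd_mem (k + 1 + 1)
    apply one_div_le_one_div_of_le <;>
      linarith [this.1, this.2, h3' (k + 1), (α (k + 1)).cast_nonneg (α := ℝ)]
  linarith [hU k, h.bwd_pos (k - 1)]

lemma not_2121_of_lt (h : TailSystem α x y)
    (hU : ∀ k, α k + x (k + 1) + y (k - 1) < (16351 + 720 * √30) / 6409) (k : ℤ) :
    ¬ (α k = 2 ∧ α (k + 1) = 1 ∧ α (k + 2) = 2 ∧ α (k + 3) = 1) := by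
  rintro ⟨h0, h1, h2, h3⟩
  have hU' := upper_endpoint_lt
  have h2' := h.le_two_of_lt hU
  have b3 : 4 / 7 ≤ x (k + 3) := by
    have := h.fwd_mem_Icc h2' (k + 4)
    rw [h.fwd_one (k + 3) h3 (j := k + 4) (by ring), div_le_div_iff₀] <;>
      linarith [this.1, this.2]
  have b0 : y k ≤ 1 / 2 := by
    have := h.bwd_pos (k - 1)
    rw [h.bwd_two k h0 rfl, div_le_div_iff₀] <;> linarith
  have b1 : 2 / 3 ≤ y (k + 1) := by
    have := h.bwd_pos k
    rw [h.bwd_one (k + 1) h1 (j := k) (by ring), div_le_div_iff₀] <;> linarith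
  have := hU (k + 2)
  rw [show k + 2 + 1 = k + 3 by ring, show k + 2 - 1 = k + 1 by ring, h2, Nat.cast_ofNat] at this
  linarith

lemma avoidsAlternating_of_lt (h : TailSystem α x y)
    (hU : ∀ k, α k + x (k + 1) + y (k - 1) < (16351 + 720 * √30) / 6409) :
    AvoidsAlternating α := by
  refine ⟨h.le_two_of_lt hU, h.not_2121_of_lt hU, fun k hk => ?_⟩
  apply h.reverse.not_2121_of_lt (reverse_value_lt hU) (-(k + 3))
  rw [show -(-(k + 3) + 1) = k + 2 by ring, show -(-(k + 3) + 2) = k + 1 by ring,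
    show -(-(k + 3) + 3) = k by ring, neg_neg]
  tauto

lemma right_112_of_121 (h : TailSystem α x y)
    (hU : ∀ k, α k + x (k + 1) + y (k - 1) < (16351 + 720 * √30) / 6409) {k : ℤ}
    (h0 : α k = 2) (hl : α (k - 1) = 1) (hr : α (k + 1) = 1) :
    α (k + 2) = 1 ∧ α (k + 3) = 2 := by
  have hα := h.avoidsAlternating_of_lt hU
  have hU' := upper_endpoint_lt
  have h2 : α (k + 2) = 1 := by
    rcases h.eq_one_or_eq_two hα (k + 2) with h2 | h2
    · exact h2
    · refine absurd ⟨hl, ?_, ?_, ?_⟩ (hα.not_1212 (k - 1))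
      · rwa [show k - 1 + 1 = k by ring]
      · rwa [show k - 1 + 2 = k + 1 by ring]
      · rwa [show k - 1 + 3 = k + 2 by ring]
  refine ⟨h2, ?_⟩
  rcases h.eq_one_or_eq_two hα (k + 3) with h3 | h3
  · have b3 := h.le_fwd_of_one hα h3
    have b2 : x (k + 2) ≤ 7 / 11 := by
      rw [h.fwd_one (k + 2) h2 (j := k + 3) (by ring), div_le_div_iff₀] <;> linarith
    have b1 : 11 / 18 ≤ x (k + 1) := by
      have := h.fwd_pos (k + 2)
      rw [h.fwd_one (k + 1) hr (j := k + 2) (by ring), div_le_div_iff₀] <;> linarith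
    have := hU k
    rw [h0, Nat.cast_ofNat] at this
    linarith [h.le_bwd_of_one hα hl]
  · exact h3

lemma left_112_of_121 (h : TailSystem α x y)
    (hU : ∀ k, α k + x (k + 1) + y (k - 1) < (16351 + 720 * √30) / 6409) {k : ℤ}
    (h0 : α k = 2) (hl : α (k - 1) = 1) (hr : α (k + 1) = 1) :
    α (k - 2) = 1 ∧ α (k - 3) = 2 := by
  have := h.reverse.right_112_of_121 (reverse_value_lt hU) (k := -k)
  simp only [neg_add, neg_sub, neg_neg, sub_neg_eq_add, ← sub_eq_add_neg, add_comm 1 k] at this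
  exact this h0 hr hl

lemma not_1_left_2_right (h : TailSystem α x y)
    (hU : ∀ k, α k + x (k + 1) + y (k - 1) < (16351 + 720 * √30) / 6409) {k : ℤ}
    (h0 : α k = 2) (hl : α (k - 1) = 1) (hr : α (k + 1) = 1) (hl4 : α (k - 4) = 1)
    (hr4 : α (k + 4) = 2) : False := by
  have hα := h.avoidsAlternating_of_lt hU
  have hs := sqrt30_gt
  obtain ⟨hr2, hr3⟩ := h.right_112_of_121 hU h0 hl hr
  obtain ⟨hl2, hl3⟩ := h.left_112_of_121 hU h0 hl hr
  obtain ⟨hl5, hl6⟩ := h.left_112_of_121 hU (k := k - 3) hl3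
    (by rwa [show k - 3 - 1 = k - 4 by ring]) (by rwa [show k - 3 + 1 = k - 2 by ring])
  rw [show k - 3 - 2 = k - 5 by ring] at hl5
  rw [show k - 3 - 3 = k - 6 by ring] at hl6
  have hx1 : (2 * √30 - 1) / 17 ≤ x (k + 1) := by
    apply h.le_fwd_of_1122 hα hr
    · rwa [show k + 1 + 1 = k + 2 by ring]
    · rwa [show k + 1 + 2 = k + 3 by ring]
    · rwa [show k + 1 + 3 = k + 4 by ring]
  have hy1 : y (k - 1) = (3 + y (k - 4)) / (5 + 2 * y (k - 4)) := by
    have := h.bwd_112 (k := k - 1) hl (by rwa [show k - 1 - 1 = k - 2 by ring])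
      (by rwa [show k - 1 - 2 = k - 3 by ring])
    rwa [show k - 1 - 3 = k - 4 by ring] at this
  have hx2 : x (k - 2) = (3 + x (k + 1)) / (5 + 2 * x (k + 1)) := by
    have := h.fwd_112 (k := k - 2) hl2 (by rwa [show k - 2 + 1 = k - 1 by ring])
      (by rwa [show k - 2 + 2 = k by ring])
    rwa [show k - 2 + 3 = k + 1 by ring] at this
  have v0 := hU k
  have v3 := hU (k - 3)
  rw [h0, Nat.cast_ofNat, ← upper_endpoint_eq, hy1] at v0
  rw [hl3, Nat.cast_ofNat, ← upper_endpoint_eq, show k - 3 + 1 = k - 2 by ring,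
    show k - 3 - 1 = k - 4 by ring, hx2] at v3
  have e5 : k - 4 - 1 = k - 5 := by ring
  have e6 : k - 4 - 2 = k - 6 := by ring
  rcases h.eq_one_or_eq_two hα (k - 4 - 3) with hl7 | hl7
  · have hy4 := h.bwd_le_of_1121 hα hl4 (by rwa [e5]) (by rwa [e6]) hl7
    linarith [three_add_div_anti (h.bwd_pos (k - 4)) hy4]
  · have hy4 := h.le_bwd_of_1122 hα hl4 (by rwa [e5]) (by rwa [e6]) hl7
    rcases le_total (y (k - 4)) (x (k + 1)) with hle | hle
    · linarith [add_three_add_div_mono (by linarith) hy4 hle]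
    · linarith [add_three_add_div_mono (by linarith) hx1 hle]

/-- A word `121` propagates to both sides with period `3`. -/
lemma right_121_of_121 (h : TailSystem α x y)
    (hU : ∀ k, α k + x (k + 1) + y (k - 1) < (16351 + 720 * √30) / 6409) {k : ℤ}
    (h0 : α k = 2) (hl : α (k - 1) = 1) (hr : α (k + 1) = 1) :
    α (k + 3) = 2 ∧ α (k + 2) = 1 ∧ α (k + 4) = 1 := by
  have hα := h.avoidsAlternating_of_lt hU
  have hs := sqrt30_gt
  have hU' := upper_endpoint_lt
  obtain ⟨hr2, hr3⟩ := h.right_112_of_121 hU h0 hl hr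
  obtain ⟨hl2, hl3⟩ := h.left_112_of_121 hU h0 hl hr
  refine ⟨hr3, hr2, ?_⟩
  rcases h.eq_one_or_eq_two hα (k + 4) with hr4 | hr4
  · exact hr4
  exfalso
  rcases h.eq_one_or_eq_two hα (k - 4) with hl4 | hl4
  · exact h.not_1_left_2_right hU h0 hl hr hl4 hr4
  · have hx1 : (2 * √30 - 1) / 17 ≤ x (k + 1) := by
      apply h.le_fwd_of_1122 hα hr
      · rwa [show k + 1 + 1 = k + 2 by ring]
      · rwa [show k + 1 + 2 = k + 3 by ring]
      · rwa [show k + 1 + 3 = k + 4 by ring]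
    have hy1 : (2 * √30 - 1) / 17 ≤ y (k - 1) := by
      apply h.le_bwd_of_1122 hα hl
      · rwa [show k - 1 - 1 = k - 2 by ring]
      · rwa [show k - 1 - 2 = k - 3 by ring]
      · rwa [show k - 1 - 3 = k - 4 by ring]
    have := hU k
    rw [h0, Nat.cast_ofNat] at this
    linarith

lemma left_121_of_121 (h : TailSystem α x y)
    (hU : ∀ k, α k + x (k + 1) + y (k - 1) < (16351 + 720 * √30) / 6409) {k : ℤ}
    (h0 : α k = 2) (hl : α (k - 1) = 1) (hr : α (k + 1) = 1) :
    α (k - 3) = 2 ∧ α (k - 2) = 1 ∧ α (k - 4) = 1 := by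
  have := h.reverse.right_121_of_121 (reverse_value_lt hU) (k := -k)
  simp only [neg_add, neg_sub, neg_neg, sub_neg_eq_add, ← sub_eq_add_neg, add_comm 1 k] at this
  exact this h0 hr hl

/-- Below the upper endpoint, a sequence containing `121` is the periodic repetition of `211`. -/
lemma eq_periodic_of_121 (h : TailSystem α x y)
    (hU : ∀ k, α k + x (k + 1) + y (k - 1) < (16351 + 720 * √30) / 6409) {k : ℤ}
    (h0 : α k = 2) (hl : α (k - 1) = 1) (hr : α (k + 1) = 1) (n : ℤ) :
    α n = if (3 : ℤ) ∣ n - k then 2 else 1 := by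
  have key : ∀ m : ℤ, α (k + 3 * m) = 2 ∧ α (k + 3 * m - 1) = 1 ∧ α (k + 3 * m + 1) = 1 := by
    intro m
    induction m using Int.induction_on with
    | zero => simpa using ⟨h0, hl, hr⟩
    | succ m ih =>
      have := h.right_121_of_121 hU ih.1 ih.2.1 ih.2.2
      rw [show k + 3 * ((m : ℤ) + 1) = k + 3 * m + 3 by ring,
        show k + 3 * (m : ℤ) + 3 - 1 = k + 3 * m + 2 by ring,
        show k + 3 * (m : ℤ) + 3 + 1 = k + 3 * m + 4 by ring]
      exact this
    | pred m ih =>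
      have := h.left_121_of_121 hU ih.1 ih.2.1 ih.2.2
      rw [show k + 3 * (-(m : ℤ) - 1) = k + 3 * -m - 3 by ring,
        show k + 3 * -(m : ℤ) - 3 - 1 = k + 3 * -m - 4 by ring,
        show k + 3 * -(m : ℤ) - 3 + 1 = k + 3 * -m - 2 by ring]
      exact ⟨this.1, this.2.2, this.2.1⟩
  obtain ⟨m, hm | hm | hm⟩ : ∃ m, n = k + 3 * m ∨ n = k + 3 * m - 1 ∨ n = k + 3 * m + 1 :=
    ⟨(n - k + 1) / 3, by omega⟩
  · rw [if_pos (by omega), hm, (key m).1]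
  · rw [if_neg (by omega), hm, (key m).2.1]
  · rw [if_neg (by omega), hm, (key m).2.2]

end TailSystem

/-! ### The three points of the spectrum -/

lemma markovValue_eq_of_le_of_eq {α : ℤ → ℕ} {c : ℝ} (hle : ∀ k, lambdaVal α k ≤ c) {j : ℤ}
    (hj : lambdaVal α j = c) : BddAbove (range (lambdaVal α)) ∧ markovValue α = c := by
  have hb : BddAbove (range (lambdaVal α)) := ⟨c, by rintro _ ⟨k, rfl⟩; exact hle k⟩
  exact ⟨hb, le_antisymm (ciSup_le hle) (hj ▸ le_ciSup hb j)⟩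

lemma eq_of_eq_three_add_div {t : ℝ} (ht : 0 < t) (h : t = (3 + t) / (5 + 2 * t)) :
    t = √10 / 2 - 1 := by
  rw [eq_div_iff (by linarith)] at h
  have hs : √10 * √10 = 10 := Real.mul_self_sqrt (by norm_num)
  have hs0 := Real.sqrt_nonneg 10
  have : (t - (√10 / 2 - 1)) * (t + √10 / 2 + 1) = 0 := by
    linear_combination (1 / 2) * h - (1 / 4) * hs
  rcases mul_eq_zero.1 this with h | h <;> linarith

lemma markovValue_periodic_211 {α : ℤ → ℕ} {k : ℤ}
    (hα : ∀ n, α n = if (3 : ℤ) ∣ n - k then 2 else 1) :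
    BddAbove (range (lambdaVal α)) ∧ markovValue α = √10 := by
  have h2 : ∀ n, (3 : ℤ) ∣ n - k → α n = 2 := fun n hn => by rw [hα, if_pos hn]
  have h1 : ∀ n, ¬ (3 : ℤ) ∣ n - k → α n = 1 := fun n hn => by rw [hα, if_neg hn]
  have hpos : ∀ n, 0 < α n := fun n => by rw [hα]; split_ifs <;> norm_num
  have h := tailSystem_tails hpos
  have hval : ∀ j, (3 : ℤ) ∣ j - k → lambdaVal α j = √10 := by
    intro j hj
    have hx : fwdTail α (j + 1) = √10 / 2 - 1 := by
      apply eq_of_eq_three_add_div (h.fwd_pos _)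
      have := h.fwd_112 (k := j + 1) (h1 _ (by omega)) (h1 _ (by omega)) (h2 _ (by omega))
      rwa [fwdTail_congr (k := j + 1 + 3) (j := j + 1)] at this
      intro n
      simp only [hα]
      congr 1
      rw [eq_iff_iff]
      omega
    have hy : bwdTail α (j - 1) = √10 / 2 - 1 := by
      apply eq_of_eq_three_add_div (h.bwd_pos _)
      have := h.bwd_112 (k := j - 1) (h1 _ (by omega)) (h1 _ (by omega)) (h2 _ (by omega))
      rwa [bwdTail_congr (k := j - 1 - 3) (j := j - 1)] at this
      intro n
      simp only [hα]
      congr 1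
      rw [eq_iff_iff]
      omega
    rw [lambdaVal_eq hpos, h2 j hj, hx, hy, Nat.cast_ofNat]
    ring
  refine markovValue_eq_of_le_of_eq (fun j => ?_) (hval k (by simp))
  by_cases hj : (3 : ℤ) ∣ j - k
  · exact (hval j hj).le
  · have hs : 3 ≤ √10 := Real.le_sqrt_of_sq_le (by norm_num)
    rw [lambdaVal_eq hpos, h1 j hj, Nat.cast_one]
    linarith [(h.fwd_mem (j + 1)).2, (h.bwd_mem (j - 1)).2]

lemma sqrt10_mem_markovSpectrum : √10 ∈ markovSpectrum :=
  ⟨fun n => if (3 : ℤ) ∣ n - 0 then 2 else 1, fun n => by dsimp only; split_ifs <;> norm_num,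
    markovValue_periodic_211 (k := 0) fun _ => rfl⟩

lemma lower_endpoint_mem_markovSpectrum : 4 * √30 / 7 ∈ markovSpectrum := by
  let α : ℤ → ℕ := fun n => if n % 4 = 0 then 1 else 2
  have hα : ∀ n, α n = if n % 4 = 0 then 1 else 2 := fun _ => rfl
  have h2 : ∀ n, n % 4 ≠ 0 → α n = 2 := fun n hn => by rw [hα, if_neg hn]
  have e1 : ∀ n, α n = 1 ↔ n % 4 = 0 := fun n => by rw [hα]; split_ifs <;> simp_all
  have e2 : ∀ n, α n = 2 ↔ n % 4 ≠ 0 := fun n => by rw [hα]; split_ifs <;> simp_all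
  have hpos : ∀ n, 0 < α n := fun n => by rw [hα]; split_ifs <;> norm_num
  have h := tailSystem_tails hpos
  have hav : AvoidsAlternating α := by
    refine ⟨fun k => by rw [hα]; split_ifs <;> norm_num, fun k => ?_, fun k => ?_⟩
    all_goals
      simp only [e1, e2]
      omega
  refine ⟨α, hpos, markovValue_eq_of_le_of_eq (j := 1) (fun k => ?_) ?_⟩
  · rw [lambdaVal_eq hpos]
    rcases h.value_le_or_121 hav k with hk | ⟨-, hl, hr⟩
    · exact hk
    · rw [e1] at hl hr
      omega
  · have hx : fwdTail α 3 = √30 / 4 - 1 := by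
      apply h.fwd_eq_tau rfl rfl rfl rfl
      apply fwdTail_congr
      intro n
      simp only [hα]
      congr 1
      rw [eq_iff_iff]
      omega
    have hy : bwdTail α (-3) = √30 / 4 - 1 := by
      apply h.bwd_eq_tau rfl rfl rfl rfl
      apply bwdTail_congr
      intro n
      simp only [hα]
      congr 1
      rw [eq_iff_iff]
      omega
    rw [lambdaVal_eq hpos, show (1 : ℤ) + 1 = 2 by rfl, show (1 : ℤ) - 1 = 0 by rfl,
      h.fwd_two 2 rfl (j := 3) rfl, hx, h.bwd_one 0 rfl (j := -1) rfl,
      h.bwd_two (-1) rfl (j := -2) rfl, h.bwd_two (-2) rfl (j := -3) rfl, hy,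
      one_div_two_add_tau, one_div_two_add_two_tau, one_div_one_add_two_two_tau, h2 1 (by norm_num),
      Nat.cast_ofNat]
    ring

lemma upper_endpoint_mem_markovSpectrum : (16351 + 720 * √30) / 6409 ∈ markovSpectrum := by
  let α : ℤ → ℕ := fun n =>
    if max n (3 - n) % 4 = 1 ∨ max n (3 - n) = 2 ∨ max n (3 - n) = 4 then 1 else 2
  have hα : ∀ n, α n =
    if max n (3 - n) % 4 = 1 ∨ max n (3 - n) = 2 ∨ max n (3 - n) = 4 then 1 else 2 := fun _ => rfl
  have e1 : ∀ n, α n = 1 ↔ max n (3 - n) % 4 = 1 ∨ max n (3 - n) = 2 ∨ max n (3 - n) = 4 :=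
    fun n => by rw [hα]; split_ifs <;> simp_all
  have e2 : ∀ n, α n = 2 ↔ ¬ (max n (3 - n) % 4 = 1 ∨ max n (3 - n) = 2 ∨ max n (3 - n) = 4) :=
    fun n => by rw [hα]; split_ifs <;> simp_all
  have hpos : ∀ n, 0 < α n := fun n => by rw [hα]; split_ifs <;> norm_num
  have h := tailSystem_tails hpos
  have hav : AvoidsAlternating α := by
    refine ⟨fun k => by rw [hα]; split_ifs <;> norm_num, fun k => ?_, fun k => ?_⟩
    all_goals
      simp only [e1, e2]
      omega
  have hx8 : fwdTail α 8 = √30 / 4 - 1 := by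
    apply h.fwd_eq_tau rfl rfl rfl rfl
    apply fwdTail_congr
    intro n
    simp only [hα]
    congr 1
    rw [eq_iff_iff]
    omega
  have hy5 : bwdTail α (-5) = √30 / 4 - 1 := by
    apply h.bwd_eq_tau rfl rfl rfl rfl
    apply bwdTail_congr
    intro n
    simp only [hα]
    congr 1
    rw [eq_iff_iff]
    omega
  have hx4 : fwdTail α 4 = (2 * √30 - 1) / 17 := by
    rw [h.fwd_one 4 rfl (j := 5) rfl, h.fwd_one 5 rfl (j := 6) rfl, h.fwd_two 6 rfl (j := 7) rfl,
      h.fwd_two 7 rfl (j := 8) rfl, hx8, one_div_two_add_tau, one_div_two_add_two_tau,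
      one_div_one_add_two_two_tau, one_div_one_add_one_two_two_tau]
  have hy1 : bwdTail α (-1) = (2 * √30 - 1) / 17 := by
    rw [h.bwd_one (-1) rfl (j := -2) rfl, h.bwd_one (-2) rfl (j := -3) rfl,
      h.bwd_two (-3) rfl (j := -4) rfl, h.bwd_two (-4) rfl (j := -5) rfl, hy5,
      one_div_two_add_tau, one_div_two_add_two_tau, one_div_one_add_two_two_tau,
      one_div_one_add_one_two_two_tau]
  have hx1 : fwdTail α 1 = _ := h.fwd_112 (k := 1) rfl rfl rfl
  have hy2 : bwdTail α 2 = _ := h.bwd_112 (k := 2) rfl rfl rfl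
  rw [show (1 : ℤ) + 3 = 4 by rfl, hx4] at hx1
  rw [show (2 : ℤ) - 3 = -1 by rfl, hy1] at hy2
  have v0 : lambdaVal α 0 = (16351 + 720 * √30) / 6409 := by
    rw [lambdaVal_eq hpos, show (0 : ℤ) + 1 = 1 by rfl, show (0 : ℤ) - 1 = -1 by rfl, hx1, hy1,
      (e2 0).2 (by norm_num), Nat.cast_ofNat, ← upper_endpoint_eq]
    ring
  have v3 : lambdaVal α 3 = (16351 + 720 * √30) / 6409 := by
    rw [lambdaVal_eq hpos, show (3 : ℤ) + 1 = 4 by rfl, show (3 : ℤ) - 1 = 2 by rfl, hx4, hy2,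
      (e2 3).2 (by norm_num), Nat.cast_ofNat, ← upper_endpoint_eq]
  refine ⟨α, hpos, markovValue_eq_of_le_of_eq (fun k => ?_) v3⟩
  rcases h.value_le_or_121 hav k with hk | ⟨h0, hl, hr⟩
  · rw [lambdaVal_eq hpos]
    linarith [sqrt30_lt]
  · rw [e1] at hl hr
    rw [e2] at h0
    obtain rfl | rfl : k = 0 ∨ k = 3 := by omega
    · exact v0.le
    · exact v3.le

/-- The intersection of the Markov spectrum with the open interval consists of
exactly one (hence isolated) point, and both endpoints belong to the Markov
spectrum. -/
theorem markov_gap_5 :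
    markovSpectrum ∩ Ioo (4 * Real.sqrt 30 / 7) ((16351 + 720 * Real.sqrt 30) / 6409) = {(Real.sqrt 10 : ℝ)} ∧
    (4 * Real.sqrt 30 / 7) ∈ markovSpectrum ∧ ((16351 + 720 * Real.sqrt 30) / 6409) ∈ markovSpectrum := by
  have hs := sqrt30_gt
  have hs' := sqrt30_lt
  refine ⟨Subset.antisymm ?_ ?_, lower_endpoint_mem_markovSpectrum,
    upper_endpoint_mem_markovSpectrum⟩
  · rintro _ ⟨⟨α, hpos, hb, rfl⟩, hL, hU⟩
    have h := tailSystem_tails hpos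
    have hlt : ∀ k, α k + fwdTail α (k + 1) + bwdTail α (k - 1)
        < (16351 + 720 * √30) / 6409 := fun k => by
      rw [← lambdaVal_eq hpos]
      exact (le_ciSup hb k).trans_lt hU
    obtain ⟨k, hk⟩ := exists_lt_of_lt_ciSup hL
    rw [lambdaVal_eq hpos] at hk
    rcases h.value_le_or_121 (h.avoidsAlternating_of_lt hlt) k with hle | ⟨h0, hl, hr⟩
    · exact absurd hk hle.not_gt
    · exact (markovValue_periodic_211 (h.eq_periodic_of_121 hlt h0 hl hr)).2
  · rintro _ rfl
    refine ⟨sqrt10_mem_markovSpectrum, ?_, ?_⟩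
    · refine lt_of_lt_of_le (by linarith) (Real.le_sqrt_of_sq_le (x := 3.16) (by norm_num))
    · refine lt_of_le_of_lt ((Real.sqrt_le_left (y := 3.164) (by norm_num)).2 (by norm_num)) ?_
      linarith
end

section
/- The intersection of the Markov spectrum M with the open interval ((58473−745√210)/15422, (1341491634738+14336533√210)/430566005892) consists of exactly one point, namely √233285/155, which is therefore an isolated point of M. Moreover, both endpoints (58473−745√210)/15422 and (1341491634738+14336533√210)/430566005892 belong to M. -/
open Filter Set MeasureTheory
open scoped ENNReal

namespace MarkovGap

/-! ### Convergence of continued fractions -/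

lemma cfConv_mem_Icc {a : ℕ → ℝ} (ha : ∀ n, 1 ≤ a n) (n : ℕ) :
    cfConv a n ∈ Icc (a 0) (a 0 + 1) := by
  induction n generalizing a with
  | zero => simp [cfConv]
  | succ n ih =>
    have h := ih (a := fun i => a (i + 1)) (fun i => ha _)
    have h1 : 1 ≤ cfConv (fun i => a (i + 1)) n := (ha _).trans h.1
    have h2 : 1 / cfConv (fun i => a (i + 1)) n ≤ 1 := by
      rw [div_le_one (by linarith)]; exact h1
    have h3 : 0 ≤ 1 / cfConv (fun i => a (i + 1)) n := by positivity
    rw [cfConv]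
    constructor <;> linarith

lemma one_le_cfConv {a : ℕ → ℝ} (ha : ∀ n, 1 ≤ a n) (n : ℕ) : 1 ≤ cfConv a n :=
  (ha 0).trans (cfConv_mem_Icc ha n).1

lemma abs_two_step_le {a b x y : ℝ} (hb : 1 ≤ b) (hx : 1 ≤ x) (hy : 1 ≤ y) :
    |(a + 1 / (b + 1 / x)) - (a + 1 / (b + 1 / y))| ≤ 1 / 4 * |x - y| := by
  have hbx : 2 ≤ b * x + 1 := by nlinarith
  have hby : 2 ≤ b * y + 1 := by nlinarith
  have e : (a + 1 / (b + 1 / x)) - (a + 1 / (b + 1 / y))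
      = (x - y) / ((b * x + 1) * (b * y + 1)) := by
    have : b * x + 1 ≠ 0 := by linarith
    have : b * y + 1 ≠ 0 := by linarith
    field_simp
    ring
  have hp : 4 ≤ (b * x + 1) * (b * y + 1) := by nlinarith
  rw [e, abs_div, abs_of_pos (by linarith : (0 : ℝ) < (b * x + 1) * (b * y + 1)),
    div_le_iff₀ (by linarith)]
  nlinarith [abs_nonneg (x - y)]

lemma abs_cfConv_sub_le {a : ℕ → ℝ} (ha : ∀ n, 1 ≤ a n) (n i j : ℕ) :
    |cfConv a (i + 2 * n) - cfConv a (j + 2 * n)| ≤ (1 / 4) ^ n := by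
  induction n generalizing a with
  | zero =>
    have hi := cfConv_mem_Icc ha i
    have hj := cfConv_mem_Icc ha j
    rw [abs_le]
    simp only [mul_zero, add_zero, pow_zero]
    constructor <;> linarith [hi.1, hi.2, hj.1, hj.2]
  | succ n ih =>
    have h := ih (a := fun i => a (i + 1 + 1)) (fun i => ha _)
    have e (i : ℕ) : i + 2 * (n + 1) = i + 2 * n + 1 + 1 := by ring
    rw [e, e]
    simp only [cfConv]
    refine (abs_two_step_le (ha _) (one_le_cfConv (fun i => ha _) _)
      (one_le_cfConv (fun i => ha _) _)).trans ?_
    rw [pow_succ]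
    linarith

lemma tendsto_cfConv {a : ℕ → ℝ} (ha : ∀ n, 1 ≤ a n) :
    Tendsto (cfConv a) atTop (nhds (cfVal a)) := by
  have hc : CauchySeq (cfConv a) := by
    refine Metric.cauchySeq_iff'.2 fun ε hε => ?_
    obtain ⟨n, hn⟩ := exists_pow_lt_of_lt_one hε (by norm_num : (1 / 4 : ℝ) < 1)
    refine ⟨2 * n, fun m hm => ?_⟩
    obtain ⟨i, rfl⟩ := Nat.exists_eq_add_of_le' hm
    have := abs_cfConv_sub_le ha n i 0
    rw [zero_add] at this
    rw [Real.dist_eq]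
    exact this.trans_lt hn
  exact CauchySeq.tendsto_limUnder hc

lemma cfVal_mem_Icc {a : ℕ → ℝ} (ha : ∀ n, 1 ≤ a n) : cfVal a ∈ Icc (a 0) (a 0 + 1) :=
  isClosed_Icc.mem_of_tendsto (tendsto_cfConv ha) (Eventually.of_forall (cfConv_mem_Icc ha))

lemma cfVal_eq_add {a : ℕ → ℝ} (ha : ∀ n, 1 ≤ a (n + 1)) :
    cfVal a = a 0 + 1 / cfVal (fun i => a (i + 1)) := by
  have h := tendsto_cfConv (a := fun i => a (i + 1)) ha
  have h1 : cfVal (fun i => a (i + 1)) ≠ 0 := by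
    have := (cfVal_mem_Icc (a := fun i => a (i + 1)) ha).1
    have := ha 0
    simp only [zero_add] at *
    linarith
  have h2 : Tendsto (fun n => cfConv a (n + 1)) atTop
      (nhds (a 0 + 1 / cfVal (fun i => a (i + 1)))) := by
    simp only [cfConv]
    exact tendsto_const_nhds.add (tendsto_const_nhds.div h h1)
  exact ((tendsto_add_atTop_iff_nat 1).1 h2).limUnder_eq

/-! ### Tails -/

/-- The value `[0; s 0, s 1, ...]`. -/
noncomputable def tailVal (s : ℕ → ℕ) : ℝ := 1 / cfVal (fun n => (s n : ℝ))

/-- The letters to the right of position `k`. -/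
def right (α : ℤ → ℕ) (k : ℤ) (n : ℕ) : ℕ := α (k + 1 + n)

/-- The letters to the left of position `k`, read leftwards. -/
def left (α : ℤ → ℕ) (k : ℤ) (n : ℕ) : ℕ := α (k - 1 - n)

lemma tailVal_eq {s : ℕ → ℕ} (hs : ∀ n, 0 < s n) :
    tailVal s = 1 / (s 0 + tailVal (fun n => s (n + 1))) := by
  unfold tailVal
  rw [cfVal_eq_add (fun n => by exact_mod_cast hs _)]

lemma tailVal_pos {s : ℕ → ℕ} (hs : ∀ n, 0 < s n) : 0 < tailVal s := by
  have h := (cfVal_mem_Icc (a := fun n => (s n : ℝ)) (fun n => by exact_mod_cast hs _)).1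
  have : (0 : ℝ) < s 0 := by exact_mod_cast hs 0
  exact one_div_pos.2 (this.trans_le h)

lemma tailVal_le_one {s : ℕ → ℕ} (hs : ∀ n, 0 < s n) : tailVal s ≤ 1 := by
  have h := (cfVal_mem_Icc (a := fun n => (s n : ℝ)) (fun n => by exact_mod_cast hs _)).1
  have : (1 : ℝ) ≤ s 0 := by exact_mod_cast hs 0
  exact (div_le_one (by linarith)).2 (this.trans h)

lemma lambdaVal_eq {α : ℤ → ℕ} (hα : ∀ n, 0 < α n) (k : ℤ) :
    lambdaVal α k = α k + tailVal (right α k) + tailVal (left α k) := by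
  unfold lambdaVal tailVal
  rw [cfVal_eq_add (fun n => by exact_mod_cast hα _),
    cfVal_eq_add (a := fun n => if n = 0 then 0 else (α (k - n) : ℝ))
      (fun n => by simpa using Nat.one_le_iff_ne_zero.2 (hα _).ne')]
  have e1 : (fun i : ℕ => (α (k + ((i + 1 : ℕ) : ℤ)) : ℝ)) = fun n => (right α k n : ℝ) := by
    funext i
    simp only [right]
    congr 2
    push_cast
    ring
  have e2 : (fun i : ℕ => if i + 1 = 0 then (0 : ℝ) else (α (k - ((i + 1 : ℕ) : ℤ)) : ℝ))
      = fun n => (left α k n : ℝ) := by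
    funext i
    simp only [left, Nat.add_eq_zero_iff, one_ne_zero, and_false, if_false]
    congr 2
    push_cast
    ring
  rw [e1, e2]
  simp

/-- The sequence read backwards. -/
def reflect (α : ℤ → ℕ) (n : ℤ) : ℕ := α (-n)

lemma right_reflect (α : ℤ → ℕ) (k : ℤ) : right (reflect α) k = left α (-k) := by
  funext n
  simp only [right, reflect, left]
  congr 1
  ring

lemma left_reflect (α : ℤ → ℕ) (k : ℤ) : left (reflect α) k = right α (-k) := by
  funext n
  simp only [right, reflect, left]
  congr 1
  ring

lemma lambdaVal_reflect {α : ℤ → ℕ} (hα : ∀ n, 0 < α n) (k : ℤ) :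
    lambdaVal (reflect α) k = lambdaVal α (-k) := by
  rw [lambdaVal_eq hα, lambdaVal_eq (α := reflect α) (fun n => hα _), right_reflect, left_reflect]
  simp only [reflect]
  ring

lemma markovValue_reflect {α : ℤ → ℕ} (hα : ∀ n, 0 < α n) :
    markovValue (reflect α) = markovValue α := by
  unfold markovValue
  simp only [lambdaVal_reflect hα]
  exact (Equiv.neg ℤ).iSup_comp (g := lambdaVal α)

lemma lambdaVal_of_symm {α : ℤ → ℕ} (hα : ∀ n, 0 < α n) {s : ℤ} (h : ∀ n, α (s - n) = α n)
    (k : ℤ) : lambdaVal α (s - k) = lambdaVal α k := by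
  have e1 : right α (s - k) = left α k := by
    funext n
    simp only [right, left]
    rw [← h]
    congr 1
    ring
  have e2 : left α (s - k) = right α k := by
    funext n
    simp only [right, left]
    rw [← h]
    congr 1
    ring
  rw [lambdaVal_eq hα, lambdaVal_eq hα, e1, e2, h]
  ring

lemma lambdaVal_shift (α : ℤ → ℕ) (j k : ℤ) :
    lambdaVal (fun n => α (j + n)) k = lambdaVal α (j + k) := by
  simp only [lambdaVal, add_assoc, add_sub_assoc]

/-! ### Comparison of tails in the alternating lexicographic order -/

lemma tailVal_le_of_shift {a r : ℕ → ℕ} (ha : ∀ n, 0 < a n) (hr : ∀ n, 0 < r n) (n : ℕ)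
    (h : ∀ i < n, a i = r i) :
    (Even n → tailVal (fun i => a (i + n)) ≤ tailVal (fun i => r (i + n)) →
      tailVal a ≤ tailVal r) ∧
    (¬ Even n → tailVal (fun i => r (i + n)) ≤ tailVal (fun i => a (i + n)) →
      tailVal a ≤ tailVal r) := by
  induction n generalizing a r with
  | zero => simp
  | succ n ih =>
    have step : tailVal (fun i => r (i + 1)) ≤ tailVal (fun i => a (i + 1)) →
        tailVal a ≤ tailVal r := by
      intro h1
      rw [tailVal_eq ha, tailVal_eq hr, h 0 n.succ_pos]
      have := tailVal_pos (s := fun i => r (i + 1)) (fun i => hr _)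
      exact one_div_le_one_div_of_le (by positivity) (by linarith)
    have := ih (a := fun i => r (i + 1)) (r := fun i => a (i + 1)) (fun i => hr _)
      (fun i => ha _) (fun i hi => (h _ (by omega)).symm)
    simp only [add_assoc] at this
    rw [Nat.even_add_one, not_not]
    exact ⟨fun hn h1 => step (this.2 hn h1), fun hn h1 => step (this.1 hn h1)⟩

lemma tailVal_le_of_lt {a r : ℕ → ℕ} (ha : ∀ n, 0 < a n) (hr : ∀ n, 0 < r n)
    (h : r 0 < a 0) : tailVal a ≤ tailVal r := by
  rw [tailVal_eq ha, tailVal_eq hr]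
  have h1 := tailVal_pos (s := fun i => r (i + 1)) (fun i => hr _)
  have h2 := tailVal_le_one (s := fun i => r (i + 1)) (fun i => hr _)
  have h3 := tailVal_pos (s := fun i => a (i + 1)) (fun i => ha _)
  have h4 : (r 0 + 1 : ℝ) ≤ a 0 := by exact_mod_cast h
  exact one_div_le_one_div_of_le (by positivity) (by linarith)

lemma tailVal_le_of_lex {a r : ℕ → ℕ} (ha : ∀ n, 0 < a n) (hr : ∀ n, 0 < r n)
    (h : ∀ n, (∀ i < n, a i = r i) → if Even n then r n ≤ a n else a n ≤ r n) :
    tailVal a ≤ tailVal r := by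
  by_cases heq : ∀ n, a n = r n
  · rw [funext heq]
  push Not at heq
  classical
  have hmin : ∀ i < Nat.find heq, a i = r i := fun i hi => not_not.1 (Nat.find_min heq hi)
  have hne := Nat.find_spec heq
  have hlex := h _ hmin
  have key := tailVal_le_of_shift ha hr _ hmin
  split_ifs at hlex with he
  · refine key.1 he (tailVal_le_of_lt (fun i => ha _) (fun i => hr _) ?_)
    simp only [zero_add]
    omega
  · refine key.2 he (tailVal_le_of_lt (fun i => hr _) (fun i => ha _) ?_)
    simp only [zero_add]
    omega

/-! ### Certified bounds from finite windows -/

/-- The letters of `l` are the first letters of `s`. -/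
def Pre (l : List ℕ) (s : ℕ → ℕ) : Prop := ∀ i a, l[i]? = some a → s i = a

lemma pre_cons {a : ℕ} {l : List ℕ} {s : ℕ → ℕ} :
    Pre (a :: l) s ↔ s 0 = a ∧ Pre l (fun n => s (n + 1)) := by
  constructor
  · exact fun h => ⟨h 0 a (by simp), fun i b hb => h (i + 1) b (by simpa using hb)⟩
  · rintro ⟨h0, h⟩ (_ | i) b hb
    · simp_all
    · exact h i b (by simpa using hb)

lemma Pre.concat {l : List ℕ} {s : ℕ → ℕ} (h : Pre l s) : Pre (l ++ [s l.length]) s := by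
  intro i a hi
  rcases lt_trichotomy i l.length with hlt | rfl | hlt
  · rw [List.getElem?_append_left hlt] at hi
    exact h i a hi
  · simpa using hi
  · rw [List.getElem?_append_right hlt.le, List.getElem?_eq_none (by simp; omega)] at hi
    simp at hi

lemma Pre.of_isPrefix {l l' : List ℕ} {s : ℕ → ℕ} (h : Pre l' s) (hl : l <+: l') : Pre l s := by
  obtain ⟨t, rfl⟩ := hl
  intro i a hi
  obtain ⟨hlt, -⟩ := List.getElem?_eq_some_iff.1 hi
  exact h i a (by rwa [List.getElem?_append_left hlt])

lemma pre_map_range {n : ℕ} {r s : ℕ → ℕ} :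
    Pre ((List.range n).map r) s ↔ ∀ i < n, s i = r i := by
  constructor
  · exact fun h i hi => h i (r i) (by simp [hi])
  · intro h i a hi
    rw [List.getElem?_map, Option.map_eq_some_iff] at hi
    obtain ⟨j, hj, rfl⟩ := hi
    obtain ⟨hlt, rfl⟩ := List.getElem?_eq_some_iff.1 hj
    rw [List.length_range] at hlt
    simpa using h i hlt

/-- A fraction `p / q`, given as the pair `(p, q)`, bounding `[0; l, ...]` from above if the flag
is set and from below otherwise, for continuations over the letters `1` and `2`. -/
def bound : Bool → List ℕ → ℕ × ℕ
  | false, [] => (1, 3)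
  | true, [] => (3, 4)
  | b, a :: l => ((bound (!b) l).2, a * (bound (!b) l).2 + (bound (!b) l).1)

/-- All letters are `1` or `2`. -/
def Binary {ι : Type*} (s : ι → ℕ) : Prop := ∀ n, s n = 1 ∨ s n = 2

lemma Binary.pos {ι : Type*} {s : ι → ℕ} (h : Binary s) (n : ι) : 0 < s n := by
  rcases h n with h | h <;> omega

lemma Binary.right {α : ℤ → ℕ} (h : Binary α) (k : ℤ) : Binary (right α k) := fun _ => h _

lemma Binary.left {α : ℤ → ℕ} (h : Binary α) (k : ℤ) : Binary (left α k) := fun _ => h _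

lemma Binary.reflect {α : ℤ → ℕ} (h : Binary α) : Binary (reflect α) := fun _ => h _

lemma tailVal_mem_Icc {s : ℕ → ℕ} (hs : Binary s) : tailVal s ∈ Icc (1 / 3 : ℝ) (3 / 4) := by
  have h0 : (1 : ℝ) ≤ s 0 ∧ (s 0 : ℝ) ≤ 2 := by
    rcases hs 0 with h | h <;> rw [h] <;> norm_num
  have h1 : (s 1 : ℝ) ≤ 2 := by
    rcases hs 1 with h | h <;> rw [h] <;> norm_num
  have hp := hs.pos
  have e : tailVal (fun n => s (n + 1)) = 1 / (s 1 + tailVal (fun n => s (n + 1 + 1))) :=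
    tailVal_eq (fun n => hp _)
  have h2 := tailVal_le_one (s := fun n => s (n + 1 + 1)) (fun n => hp _)
  have h2' := tailVal_pos (s := fun n => s (n + 1 + 1)) (fun n => hp _)
  have h3 := tailVal_le_one (s := fun n => s (n + 1)) (fun n => hp _)
  have h4 : 1 / 3 ≤ tailVal (fun n => s (n + 1)) := by
    rw [e]
    exact one_div_le_one_div_of_le (by positivity) (by linarith)
  rw [tailVal_eq hp]
  constructor
  · exact one_div_le_one_div_of_le (by linarith) (by linarith)
  · rw [div_le_iff₀ (by linarith)]
    linarith

lemma bound_snd_pos (b : Bool) (l : List ℕ) (hl : ∀ a ∈ l, 0 < a) : 0 < (bound b l).2 := by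
  induction l generalizing b with
  | nil => cases b <;> simp [bound]
  | cons a l ih =>
    have := ih (!b) (fun x hx => hl x (List.mem_cons_of_mem _ hx))
    have h2 := hl a List.mem_cons_self
    simp only [bound]
    positivity

lemma Pre.forall_mem_pos {l : List ℕ} {s : ℕ → ℕ} (h : Pre l s) (hs : Binary s) :
    ∀ a ∈ l, 0 < a := by
  intro a ha
  obtain ⟨i, hi⟩ := List.mem_iff_getElem?.1 ha
  exact h i a hi ▸ hs.pos i

lemma tailVal_bound {l : List ℕ} {s : ℕ → ℕ} (hs : Binary s) (h : Pre l s) :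
    ((bound false l).1 / (bound false l).2 : ℝ) ≤ tailVal s ∧
      tailVal s ≤ ((bound true l).1 / (bound true l).2 : ℝ) := by
  induction l generalizing s with
  | nil =>
    have := tailVal_mem_Icc hs
    simp only [bound]
    push_cast
    exact this
  | cons a l ih =>
    have hpos := h.forall_mem_pos hs
    have hpos' : ∀ x ∈ l, 0 < x := fun x hx => hpos x (List.mem_cons_of_mem _ hx)
    obtain ⟨h0, h1⟩ := pre_cons.1 h
    obtain ⟨hlo, hhi⟩ := ih (s := fun n => s (n + 1)) (fun n => hs _) h1
    have ht := tailVal_pos (s := fun n => s (n + 1)) (fun n => hs.pos _)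
    have ha : (0 : ℝ) < a := by exact_mod_cast hpos a List.mem_cons_self
    rw [tailVal_eq hs.pos, h0]
    have e (b : Bool) : ((bound b (a :: l)).1 / (bound b (a :: l)).2 : ℝ)
        = 1 / (a + (bound (!b) l).1 / (bound (!b) l).2) := by
      have : (0 : ℝ) < (bound (!b) l).2 := by exact_mod_cast bound_snd_pos _ _ hpos'
      simp only [bound]
      push_cast
      field_simp
    rw [e, e]
    constructor
    · exact one_div_le_one_div_of_le (by linarith) (by simpa using hhi)
    · exact one_div_le_one_div_of_le (by positivity) (by simpa using hlo)

/-- Around position `k` the sequence reads `L` leftwards, then `c`, then `R` rightwards. -/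
def Matches (α : ℤ → ℕ) (k : ℤ) (L : List ℕ) (c : ℕ) (R : List ℕ) : Prop :=
  α k = c ∧ Pre L (left α k) ∧ Pre R (right α k)

lemma Matches.reflect {α : ℤ → ℕ} {k : ℤ} {L R : List ℕ} {c : ℕ} (h : Matches α k L c R) :
    Matches (reflect α) (-k) R c L := by
  refine ⟨?_, ?_, ?_⟩
  · simpa [MarkovGap.reflect] using h.1
  · simpa [left_reflect] using h.2.2
  · simpa [right_reflect] using h.2.1

lemma right_succ (α : ℤ → ℕ) (k : ℤ) : (fun n => right α k (n + 1)) = right α (k + 1) := by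
  funext n
  simp only [right]
  congr 1
  push_cast
  ring

lemma left_succ (α : ℤ → ℕ) (k : ℤ) : (fun n => left α (k + 1) (n + 1)) = left α k := by
  funext n
  simp only [left]
  congr 1
  push_cast
  ring

lemma Matches.moveRight {α : ℤ → ℕ} {k : ℤ} {L R : List ℕ} {c r : ℕ}
    (h : Matches α k L c (r :: R)) : Matches α (k + 1) (c :: L) r R := by
  obtain ⟨hc, hL, hR⟩ := h
  obtain ⟨hr, hR'⟩ := pre_cons.1 hR
  refine ⟨by simpa [right] using hr, pre_cons.2 ⟨by simpa [left] using hc, ?_⟩, ?_⟩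
  · rwa [left_succ]
  · rwa [right_succ] at hR'

/-- Comparison of `c + [0; L] + [0; R]` with the fraction `p / q`: the window forces `λ ≥ p / q`. -/
def windowGe (p q : ℕ) (L : List ℕ) (c : ℕ) (R : List ℕ) : Bool :=
  Nat.ble (p * ((bound false L).2 * (bound false R).2))
    (q * (c * ((bound false L).2 * (bound false R).2) +
      ((bound false L).1 * (bound false R).2 + (bound false R).1 * (bound false L).2)))

/-- The window forces `λ ≤ p / q`. -/
def windowLe (p q : ℕ) (L : List ℕ) (c : ℕ) (R : List ℕ) : Bool :=
  Nat.ble (q * (c * ((bound true L).2 * (bound true R).2) +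
      ((bound true L).1 * (bound true R).2 + (bound true R).1 * (bound true L).2)))
    (p * ((bound true L).2 * (bound true R).2))

lemma Matches.le_lambdaVal {α : ℤ → ℕ} (hα : Binary α) {k : ℤ} {L R : List ℕ} {c p q : ℕ}
    (hq : 0 < q) (h : Matches α k L c R) (hw : windowGe p q L c R = true) :
    (p / q : ℝ) ≤ lambdaVal α k := by
  rw [lambdaVal_eq hα.pos, h.1]
  have h1 := (tailVal_bound (hα.right k) h.2.2).1
  have h2 := (tailVal_bound (hα.left k) h.2.1).1
  have p1 := bound_snd_pos false _ (h.2.2.forall_mem_pos (hα.right k))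
  have p2 := bound_snd_pos false _ (h.2.1.forall_mem_pos (hα.left k))
  have hw := Nat.le_of_ble_eq_true hw
  set x := bound false L
  set y := bound false R
  have hw' : (p * (x.2 * y.2) : ℝ) ≤ q * (c * (x.2 * y.2) + (x.1 * y.2 + y.1 * x.2)) := by
    exact_mod_cast hw
  have e : (p / q : ℝ) ≤ c + y.1 / y.2 + x.1 / x.2 := by
    have e1 : (c + y.1 / y.2 + x.1 / x.2 : ℝ)
        = (c * (x.2 * y.2) + (x.1 * y.2 + y.1 * x.2)) / (x.2 * y.2) := by
      field_simp
      ring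
    rw [e1, div_le_div_iff₀ (by positivity) (by positivity)]
    linarith
  linarith

lemma Matches.lambdaVal_le {α : ℤ → ℕ} (hα : Binary α) {k : ℤ} {L R : List ℕ} {c p q : ℕ}
    (hq : 0 < q) (h : Matches α k L c R) (hw : windowLe p q L c R = true) :
    lambdaVal α k ≤ (p / q : ℝ) := by
  rw [lambdaVal_eq hα.pos, h.1]
  have h1 := (tailVal_bound (hα.right k) h.2.2).2
  have h2 := (tailVal_bound (hα.left k) h.2.1).2
  have p1 := bound_snd_pos true _ (h.2.2.forall_mem_pos (hα.right k))
  have p2 := bound_snd_pos true _ (h.2.1.forall_mem_pos (hα.left k))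
  have hw := Nat.le_of_ble_eq_true hw
  set x := bound true L
  set y := bound true R
  have hw' : (q * (c * (x.2 * y.2) + (x.1 * y.2 + y.1 * x.2)) : ℝ) ≤ p * (x.2 * y.2) := by
    exact_mod_cast hw
  have e : c + y.1 / y.2 + x.1 / x.2 ≤ (p / q : ℝ) := by
    have e1 : (c + y.1 / y.2 + x.1 / x.2 : ℝ)
        = (c * (x.2 * y.2) + (x.1 * y.2 + y.1 * x.2)) / (x.2 * y.2) := by
      field_simp
      ring
    rw [e1, div_le_div_iff₀ (by positivity) (by positivity)]
    linarith
  linarith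

/-! ### A certified search over windows -/

/-- Some position of the window at or to the right of the centre forces
`λ ≥ 3116129403 / 1000000000`. -/
def badRight : List ℕ → ℕ → List ℕ → Bool
  | L, c, [] => windowGe 3116129403 1000000000 L c []
  | L, c, r :: R => windowGe 3116129403 1000000000 L c (r :: R) || badRight (c :: L) r R

/-- Some position of the window forces `λ ≥ 3116129403 / 1000000000`. -/
def bad (L : List ℕ) (c : ℕ) (R : List ℕ) : Bool := badRight L c R || badRight R c L

/-- Every continuation of the window is bad or satisfies the stopping criterion. -/
def search (accept : List ℕ → ℕ → List ℕ → Bool) : ℕ → List ℕ → ℕ → List ℕ → Bool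
  | 0, L, c, R => bad L c R || accept L c R
  | n + 1, L, c, R => bad L c R || accept L c R ||
      bif n % 2 == 0 then search accept n (L ++ [1]) c R && search accept n (L ++ [2]) c R
      else search accept n L c (R ++ [1]) && search accept n L c (R ++ [2])

/-- A binary sequence all of whose values `λ` are less than `3116129403 / 1000000000`. -/
structure Good (α : ℤ → ℕ) : Prop where
  binary : Binary α
  lt (k : ℤ) : lambdaVal α k < 3116129403 / 1000000000

lemma Good.reflect {α : ℤ → ℕ} (h : Good α) : Good (reflect α) :=
  ⟨h.binary.reflect, fun k => by rw [lambdaVal_reflect h.binary.pos]; exact h.lt _⟩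

lemma Good.badRight_eq_false {α : ℤ → ℕ} (hα : Good α) {k : ℤ} {L R : List ℕ} {c : ℕ}
    (h : Matches α k L c R) : badRight L c R = false := by
  have key {k : ℤ} {L R : List ℕ} {c : ℕ} (h : Matches α k L c R) :
      windowGe 3116129403 1000000000 L c R = false := by
    rw [Bool.eq_false_iff]
    intro hw
    have := h.le_lambdaVal hα.binary (by norm_num) hw
    push_cast at this
    exact absurd (hα.lt k) this.not_gt
  induction R generalizing k L c with
  | nil => exact key h
  | cons r R ih => simp only [badRight, key h, ih h.moveRight, Bool.or_self]

lemma Good.bad_eq_false {α : ℤ → ℕ} (hα : Good α) {k : ℤ} {L R : List ℕ} {c : ℕ}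
    (h : Matches α k L c R) : bad L c R = false := by
  simp only [bad, hα.badRight_eq_false h, hα.reflect.badRight_eq_false h.reflect, Bool.or_self]

lemma Good.exists_accept {α : ℤ → ℕ} (hα : Good α) {accept : List ℕ → ℕ → List ℕ → Bool} {n : ℕ}
    {k : ℤ} {L R : List ℕ} {c : ℕ} (h : Matches α k L c R) (hs : search accept n L c R = true) :
    ∃ L' R', Matches α k L' c R' ∧ accept L' c R' = true := by
  induction n generalizing L R with
  | zero =>
    simp only [search, hα.bad_eq_false h, Bool.false_or] at hs
    exact ⟨L, R, h, hs⟩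
  | succ n ih =>
    simp only [search, hα.bad_eq_false h, Bool.false_or, Bool.or_eq_true] at hs
    rcases hs with hs | hs
    · exact ⟨L, R, h, hs⟩
    · have hL := h.2.1.concat
      have hR := h.2.2.concat
      cases hn : n % 2 == 0 <;>
        simp only [hn, cond_true, cond_false, Bool.and_eq_true] at hs
      · rcases hα.binary.right k R.length with e | e <;> rw [e] at hR
        · exact ih ⟨h.1, h.2.1, hR⟩ hs.1
        · exact ih ⟨h.1, h.2.1, hR⟩ hs.2
      · rcases hα.binary.left k L.length with e | e <;> rw [e] at hL
        · exact ih ⟨h.1, hL, h.2.2⟩ hs.1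
        · exact ih ⟨h.1, hL, h.2.2⟩ hs.2

/-! ### Eventually periodic tails -/

/-- The stream with initial word `pre`, followed by the period `per`. -/
def evPer (pre per : List ℕ) (n : ℕ) : ℕ :=
  if n < pre.length then pre.getD n 1 else per.getD ((n - pre.length) % per.length) 1

lemma binary_evPer {pre per : List ℕ} (h1 : ∀ a ∈ pre, a = 1 ∨ a = 2)
    (h2 : ∀ a ∈ per, a = 1 ∨ a = 2) : Binary (evPer pre per) := by
  have key {l : List ℕ} (h : ∀ a ∈ l, a = 1 ∨ a = 2) (i : ℕ) : l.getD i 1 = 1 ∨ l.getD i 1 = 2 := by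
    by_cases hi : i < l.length
    · rw [List.getD_eq_getElem _ _ hi]
      exact h _ (List.getElem_mem hi)
    · rw [List.getD_eq_default _ _ (not_lt.1 hi)]
      exact Or.inl rfl
  intro n
  unfold evPer
  split_ifs
  · exact key h1 _
  · exact key h2 _

lemma evPer_add_length {pre per : List ℕ} {n : ℕ} (hn : pre.length ≤ n) :
    evPer pre per (n + per.length) = evPer pre per n := by
  rw [evPer, if_neg (by omega), evPer, if_neg (by omega), Nat.sub_add_comm hn, Nat.add_mod_right]

lemma evPer_cons_succ (a : ℕ) (pre per : List ℕ) :
    (fun n => evPer (a :: pre) per (n + 1)) = evPer pre per := by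
  funext n
  simp only [evPer, List.length_cons, Nat.add_lt_add_iff_right, List.getD_cons_succ,
    Nat.add_sub_add_right]

lemma evPer_self (per : List ℕ) : evPer per per = evPer [] per := by
  funext n
  unfold evPer
  simp only [List.length_nil, not_lt_zero, if_false, Nat.sub_zero]
  split_ifs with h
  · rw [Nat.mod_eq_of_lt h]
  · rw [Nat.mod_eq_sub_mod (not_lt.1 h)]

lemma tailVal_evPer_cons {a : ℕ} {pre per : List ℕ} (h : Binary (evPer (a :: pre) per)) :
    tailVal (evPer (a :: pre) per) = 1 / (a + tailVal (evPer pre per)) := by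
  rw [tailVal_eq h.pos, evPer_cons_succ]
  simp [evPer]

/-- The stream with initial word `pre`, followed by the period `2, 2, 2, 1, 1, 1`. -/
abbrev hexTail (pre : List ℕ) : ℕ → ℕ := evPer pre [2, 2, 2, 1, 1, 1]

/-- The continued fraction `[0; l, x]`. -/
noncomputable def cfApply (l : List ℕ) (x : ℝ) : ℝ :=
  l.foldr (fun (a : ℕ) (y : ℝ) => 1 / ((a : ℝ) + y)) x

lemma tailVal_evPer {pre per : List ℕ} (h1 : ∀ a ∈ pre, a = 1 ∨ a = 2)
    (h2 : ∀ a ∈ per, a = 1 ∨ a = 2) :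
    tailVal (evPer pre per) = cfApply pre (tailVal (evPer [] per)) := by
  induction pre with
  | nil => rfl
  | cons a pre ih =>
    rw [tailVal_evPer_cons (binary_evPer h1 h2),
      ih (fun x hx => h1 x (List.mem_cons_of_mem _ hx))]
    rfl

lemma tailVal_period {per : List ℕ} (h : ∀ a ∈ per, a = 1 ∨ a = 2) :
    tailVal (evPer [] per) = cfApply per (tailVal (evPer [] per)) := by
  rw [← tailVal_evPer h h, evPer_self]

lemma hexTail_cons_succ (a : ℕ) (pre : List ℕ) (n : ℕ) :
    hexTail (a :: pre) (n + 1) = hexTail pre n := congrFun (evPer_cons_succ a pre _) n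

lemma tailVal_hexTail_nil : tailVal (hexTail []) = (2 * √210 - 17) / 29 := by
  have h := tailVal_period (per := [2, 2, 2, 1, 1, 1]) (by decide)
  have hp : 0 < tailVal (hexTail []) := tailVal_pos (binary_evPer (by decide) (by decide)).pos
  set x := tailVal (hexTail [])
  have h' : 29 * x ^ 2 + 34 * x = 19 := by
    simp only [cfApply, List.foldr] at h
    push_cast at h
    field_simp at h
    linarith
  have hs : √210 ^ 2 = 210 := Real.sq_sqrt (by norm_num)
  have hs0 : 0 ≤ √210 := Real.sqrt_nonneg _
  have : (29 * x + 17) = 2 * √210 :=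
    (pow_left_inj₀ (by positivity) (by positivity) two_ne_zero).1 (by nlinarith)
  linarith

lemma tailVal_hexTail {pre : List ℕ} (h : ∀ a ∈ pre, a = 1 ∨ a = 2) :
    tailVal (hexTail pre) = cfApply pre ((2 * √210 - 17) / 29) := by
  rw [tailVal_evPer h (by decide), tailVal_hexTail_nil]

lemma sqrt_two_hundred_ten_gt : 14491376746189438 / 1000000000000000 < √210 :=
  Real.lt_sqrt_of_sq_lt (by norm_num)

lemma sqrt_two_hundred_ten_lt : √210 < 14491376746189439 / 1000000000000000 :=
  (Real.sqrt_lt' (by norm_num)).2 (by norm_num)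

lemma tailVal_lowRight : tailVal (hexTail [1, 2, 2, 1, 1]) = (523 - 2 * √210) / 701 := by
  have hs : √210 ^ 2 = 210 := Real.sq_sqrt (by norm_num)
  have h0 := sqrt_two_hundred_ten_gt
  have hx : 0 < (2 * √210 - 17) / 29 := by linarith
  rw [tailVal_hexTail (by decide)]
  have e : cfApply [1, 2, 2, 1, 1] ((2 * √210 - 17) / 29)
      = (7 * ((2 * √210 - 17) / 29) + 12) / (10 * ((2 * √210 - 17) / 29) + 17) := by
    simp only [cfApply, List.foldr]
    generalize (2 * √210 - 17) / 29 = x at hx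
    push_cast
    field_simp
    ring
  rw [e, div_eq_iff (by positivity)]
  linear_combination (40 / 20329 : ℝ) * hs

lemma tailVal_lowLeft : tailVal (hexTail [2, 1, 1]) = (23 - √210) / 22 := by
  have hs : √210 ^ 2 = 210 := Real.sq_sqrt (by norm_num)
  have h0 := sqrt_two_hundred_ten_gt
  have hx : 0 < (2 * √210 - 17) / 29 := by linarith
  rw [tailVal_hexTail (by decide)]
  have e : cfApply [2, 1, 1] ((2 * √210 - 17) / 29)
      = (1 * ((2 * √210 - 17) / 29) + 2) / (3 * ((2 * √210 - 17) / 29) + 5) := by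
    simp only [cfApply, List.foldr]
    generalize (2 * √210 - 17) / 29 = x at hx
    push_cast
    field_simp
    ring
  rw [e, div_eq_iff (by positivity)]
  linear_combination (6 / 638 : ℝ) * hs

lemma tailVal_highRight :
    tailVal (hexTail [1, 2, 2, 1, 2, 2, 1, 1]) = (21018 + √210) / 29908 := by
  have hs : √210 ^ 2 = 210 := Real.sq_sqrt (by norm_num)
  have h0 := sqrt_two_hundred_ten_gt
  have hx : 0 < (2 * √210 - 17) / 29 := by linarith
  rw [tailVal_hexTail (by decide)]
  have e : cfApply [1, 2, 2, 1, 2, 2, 1, 1] ((2 * √210 - 17) / 29)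
      = (64 * ((2 * √210 - 17) / 29) + 109) / (91 * ((2 * √210 - 17) / 29) + 155) := by
    simp only [cfApply, List.foldr]
    generalize (2 * √210 - 17) / 29 = x at hx
    push_cast
    field_simp
    ring
  rw [e, div_eq_iff (by positivity)]
  linear_combination (-182 / (29 * 29908) : ℝ) * hs

/-- The function `x ↦ [0; 2, 2, 2, x]`. -/
noncomputable def threeTwos (x : ℝ) : ℝ := 1 / (2 + 1 / (2 + 1 / (2 + x)))

lemma threeTwos_eq {x : ℝ} (hx : 0 ≤ x) : threeTwos x = (5 + 2 * x) / (12 + 5 * x) := by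
  unfold threeTwos
  field_simp
  ring

lemma add_threeTwos_le {x y : ℝ} (hx : 0 ≤ x) (hxy : x ≤ y) :
    x + threeTwos x ≤ y + threeTwos y := by
  have hy := hx.trans hxy
  rw [threeTwos_eq hx, threeTwos_eq hy]
  have e : y + (5 + 2 * y) / (12 + 5 * y) - (x + (5 + 2 * x) / (12 + 5 * x))
      = (y - x) * (1 - 1 / ((12 + 5 * y) * (12 + 5 * x))) := by
    field_simp
    ring
  have h1 : 1 / ((12 + 5 * y) * (12 + 5 * x)) ≤ 1 := by
    rw [div_le_one (by positivity)]
    nlinarith [mul_nonneg hx hy]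
  nlinarith [mul_nonneg (sub_nonneg.2 hxy) (sub_nonneg.2 h1)]

lemma high_value :
    2 + tailVal (hexTail [1, 2, 2, 1, 2, 2, 1, 1])
      + threeTwos (tailVal (hexTail [1, 2, 2, 1, 2, 2, 1, 1]))
      = (1341491634738 + 14336533 * √210) / 430566005892 := by
  have hs : √210 ^ 2 = 210 := Real.sq_sqrt (by norm_num)
  have h0 := sqrt_two_hundred_ten_gt
  rw [tailVal_highRight, threeTwos_eq (by positivity)]
  have e : (5 + 2 * ((21018 + √210) / 29908)) / (12 + 5 * ((21018 + √210) / 29908))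
      = (5944134 - 2 * √210) / 14396349 := by
    rw [div_eq_div_iff (by positivity) (by norm_num)]
    linear_combination (10 / 29908 : ℝ) * hs
  rw [e]
  ring

lemma low_value :
    2 + tailVal (hexTail [1, 2, 2, 1, 1]) + tailVal (hexTail [2, 1, 1])
      = (58473 - 745 * √210) / 15422 := by
  rw [tailVal_lowRight, tailVal_lowLeft]
  ring

lemma sqrt_isolated_gt : 48299585919 / 100000000 < √233285 :=
  Real.lt_sqrt_of_sq_lt (by norm_num)

lemma sqrt_isolated_lt : √233285 < 48299585920 / 100000000 :=
  (Real.sqrt_lt' (by norm_num)).2 (by norm_num)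

lemma tailVal_isolatedRight :
    tailVal (evPer [] [1, 2, 2, 1, 2, 2, 2, 2]) = (√233285 - 265) / 310 := by
  have h := tailVal_period (per := [1, 2, 2, 1, 2, 2, 2, 2]) (by decide)
  have hp : 0 < tailVal (evPer [] [1, 2, 2, 1, 2, 2, 2, 2]) :=
    tailVal_pos (binary_evPer (by decide) (by decide)).pos
  set x := tailVal (evPer [] [1, 2, 2, 1, 2, 2, 2, 2])
  have h' : 155 * x ^ 2 + 265 * x = 263 := by
    simp only [cfApply, List.foldr] at h
    push_cast at h
    field_simp at h
    linarith
  have hs : √233285 ^ 2 = 233285 := Real.sq_sqrt (by norm_num)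
  have : 310 * x + 265 = √233285 :=
    (pow_left_inj₀ (by positivity) (by positivity) two_ne_zero).1 (by nlinarith)
  linarith

lemma tailVal_isolatedLeft :
    tailVal (evPer [] [2, 2, 2, 1, 2, 2, 1, 2]) = (√233285 - 355) / 310 := by
  have h := tailVal_period (per := [2, 2, 2, 1, 2, 2, 1, 2]) (by decide)
  have hp : 0 < tailVal (evPer [] [2, 2, 2, 1, 2, 2, 1, 2]) :=
    tailVal_pos (binary_evPer (by decide) (by decide)).pos
  set x := tailVal (evPer [] [2, 2, 2, 1, 2, 2, 1, 2])
  have h' : 155 * x ^ 2 + 355 * x = 173 := by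
    simp only [cfApply, List.foldr] at h
    push_cast at h
    field_simp at h
    linarith
  have hs : √233285 ^ 2 = 233285 := Real.sq_sqrt (by norm_num)
  have : 310 * x + 355 = √233285 :=
    (pow_left_inj₀ (by positivity) (by positivity) two_ne_zero).1 (by nlinarith)
  linarith

/-! ### Extremal tails of good sequences -/

/-- Replacing the letter `r n`, after the eight letters preceding it, gives a bad window whenever
this would increase (if the flag is set) or decrease (otherwise) the value of the tail. -/
def devCheck (up : Bool) (r : ℕ → ℕ) (n : ℕ) : Bool :=
  !(r n == bif (n % 2 == 0) == up then 2 else 1) ||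
    bad ((List.range 8).map fun i => r (n - 1 - i)) (3 - r n) []

lemma devCheck_add_six {up : Bool} {r : ℕ → ℕ} (hr : ∀ n, 8 ≤ n → r (n + 6) = r n) {n : ℕ}
    (hn : 16 ≤ n) : devCheck up r (n + 6) = devCheck up r n := by
  have e1 : (n + 6) % 2 = n % 2 := by omega
  have e2 : ((List.range 8).map fun i => r (n + 6 - 1 - i))
      = (List.range 8).map fun i => r (n - 1 - i) := by
    refine List.map_congr_left fun i hi => ?_
    have := List.mem_range.1 hi
    rw [← hr (n - 1 - i) (by omega)]
    congr 1
    omega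
  unfold devCheck
  rw [hr n (by omega), e1, e2]

lemma devCheck_of_le {up : Bool} {r : ℕ → ℕ} (hr : ∀ n, 8 ≤ n → r (n + 6) = r n)
    (h : ∀ i < 14, devCheck up r (i + 8) = true) {n : ℕ} (hn : 8 ≤ n) :
    devCheck up r n = true := by
  induction n using Nat.strong_induction_on with
  | _ n ih =>
    by_cases h1 : n < 22
    · have := h (n - 8) (by omega)
      rwa [Nat.sub_add_cancel hn] at this
    · have := devCheck_add_six (up := up) hr (n := n - 6) (by omega)
      rw [Nat.sub_add_cancel (by omega)] at this
      rw [this]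
      exact ih _ (by omega) (by omega)

lemma Good.eq_of_devCheck {α : ℤ → ℕ} (hα : Good α) {k : ℤ} {r : ℕ → ℕ} (hr : Binary r)
    {up : Bool} {n : ℕ} (hn : 8 ≤ n) (hd : devCheck up r n = true)
    (h : ∀ i < n, right α k i = r i) (hrn : r n = bif (n % 2 == 0) == up then 2 else 1) :
    right α k n = r n := by
  by_contra hne
  have e : right α k n = 3 - r n := by
    rcases hr n with h1 | h1 <;> rcases hα.binary.right k n with h2 | h2 <;> omega
  have hm : Matches α (k + 1 + n) ((List.range 8).map fun i => r (n - 1 - i)) (3 - r n) [] := by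
    refine ⟨e, pre_map_range.2 fun i hi => ?_, fun i a hi => by simp at hi⟩
    rw [← h _ (by omega)]
    simp only [left, right]
    congr 1
    omega
  simp [devCheck, ← hrn, hα.bad_eq_false hm] at hd

lemma Good.tailVal_right_le {α : ℤ → ℕ} (hα : Good α) {k : ℤ} {r : ℕ → ℕ} (hr : Binary r)
    (hper : ∀ n, 8 ≤ n → r (n + 6) = r n) (hd : ∀ i < 14, devCheck true r (i + 8) = true)
    (h : ∀ i < 8, right α k i = r i) : tailVal (right α k) ≤ tailVal r := by
  refine tailVal_le_of_lex (hα.binary.right k).pos hr.pos fun n hn => ?_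
  by_cases hlt : n < 8
  · simp [h n hlt]
  have key := hα.eq_of_devCheck hr (not_lt.1 hlt) (devCheck_of_le hper hd (not_lt.1 hlt)) hn
  have ha := hα.binary.right k n
  split_ifs with he
  · rw [Nat.even_iff] at he
    simp only [he, beq_self_eq_true, cond_true] at key
    rcases hr n with h1 | h1 <;> omega
  · rw [Nat.not_even_iff] at he
    simp only [he] at key
    rcases hr n with h1 | h1
    · exact (key h1).le
    · omega

lemma Good.le_tailVal_right {α : ℤ → ℕ} (hα : Good α) {k : ℤ} {r : ℕ → ℕ} (hr : Binary r)
    (hper : ∀ n, 8 ≤ n → r (n + 6) = r n) (hd : ∀ i < 14, devCheck false r (i + 8) = true)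
    (h : ∀ i < 8, right α k i = r i) : tailVal r ≤ tailVal (right α k) := by
  refine tailVal_le_of_lex hr.pos (hα.binary.right k).pos fun n hn => ?_
  by_cases hlt : n < 8
  · simp [h n hlt]
  have key := hα.eq_of_devCheck hr (not_lt.1 hlt) (devCheck_of_le hper hd (not_lt.1 hlt))
    (fun i hi => (hn i hi).symm)
  have ha := hα.binary.right k n
  split_ifs with he
  · rw [Nat.even_iff] at he
    simp only [he] at key
    rcases hr n with h1 | h1
    · exact (key h1).le
    · omega
  · rw [Nat.not_even_iff] at he
    simp only [he] at key
    rcases hr n with h1 | h1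
    · omega
    · exact (key h1).ge

/-! ### Classification of the large values of good sequences -/

/-- The first twelve letters of a stream. -/
def window (r : ℕ → ℕ) : List ℕ := (List.range 12).map r

/-- The left and right windows at a maximal position of the sequence realising the lower
endpoint. -/
def lowWindows : List ℕ × List ℕ := (window (hexTail [2, 1, 1]), window (hexTail [1, 2, 2, 1, 1]))

/-- The left and right windows at a maximal position of the sequence realising the upper
endpoint. -/
def highWindows : List ℕ × List ℕ :=
  (window (hexTail [2, 2, 2, 1, 2, 2, 1, 2, 2, 1, 1]), window (hexTail [1, 2, 2, 1, 2, 2, 1, 1]))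

/-- The left and right windows at a maximal position of the sequence realising the isolated
point. -/
def isolatedWindows : List ℕ × List ℕ :=
  (window (evPer [] [2, 2, 2, 1, 2, 2, 1, 2]), window (evPer [] [1, 2, 2, 1, 2, 2, 2, 2]))

/-- The window extends `t` around a centre `2`. -/
def extendsWindows (t : List ℕ × List ℕ) (L : List ℕ) (c : ℕ) (R : List ℕ) : Bool :=
  c == 2 && (t.1.isPrefixOf L && t.2.isPrefixOf R)

lemma Matches.of_extendsWindows {α : ℤ → ℕ} {k : ℤ} {t : List ℕ × List ℕ} {L R : List ℕ} {c : ℕ}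
    (h : Matches α k L c R) (ht : extendsWindows t L c R = true) : Matches α k t.1 2 t.2 := by
  simp only [extendsWindows, Bool.and_eq_true, beq_iff_eq, List.isPrefixOf_iff_prefix] at ht
  obtain ⟨rfl, h1, h2⟩ := ht
  exact ⟨h.1, h.2.1.of_isPrefix h1, h.2.2.of_isPrefix h2⟩

/-- Stopping criterion of the classification. -/
def classified (L : List ℕ) (c : ℕ) (R : List ℕ) : Bool :=
  windowLe 3091487765 1000000000 L c R ||
    [lowWindows, highWindows, isolatedWindows].any fun t =>
      extendsWindows t L c R || extendsWindows t.swap L c R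

lemma search_classified_one : search classified 30 [] 1 [] = true := by decide +kernel

lemma search_classified_two : search classified 30 [] 2 [] = true := by decide +kernel

lemma search_isolated_add :
    search (extendsWindows isolatedWindows) 30
      ([2, 2, 2, 1, 2, 2, 1, 2] ++ isolatedWindows.1) 2 [1, 2, 2, 1] = true := by
  decide +kernel

lemma search_isolated_sub :
    search (extendsWindows isolatedWindows) 30
      [2, 2, 2, 1] 2 ([1, 2, 2, 1, 2, 2, 2, 2] ++ isolatedWindows.2) = true := by
  decide +kernel

lemma devCheck_lowRight : ∀ i < 14, devCheck true (hexTail [1, 2, 2, 1, 1]) (i + 8) = true := by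
  decide +kernel

lemma devCheck_lowLeft : ∀ i < 14, devCheck true (hexTail [2, 1, 1]) (i + 8) = true := by
  decide +kernel

lemma devCheck_highRight :
    ∀ i < 14, devCheck false (hexTail [1, 2, 2, 1, 2, 2, 1, 1]) (i + 8) = true := by
  decide +kernel

lemma Good.classification {α : ℤ → ℕ} (hα : Good α) (k : ℤ)
    (hk : 3091487765 / 1000000000 < lambdaVal α k) :
    ∃ t ∈ [lowWindows, highWindows, isolatedWindows],
      Matches α k t.1 2 t.2 ∨ Matches (MarkovGap.reflect α) (-k) t.1 2 t.2 := by
  have h0 : Matches α k [] (α k) [] := ⟨rfl, fun i a h => by simp at h, fun i a h => by simp at h⟩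
  have hs : search classified 30 [] (α k) [] = true := by
    rcases hα.binary k with h | h <;> rw [h]
    · exact search_classified_one
    · exact search_classified_two
  obtain ⟨L, R, hm, hst⟩ := hα.exists_accept h0 hs
  rw [classified, Bool.or_eq_true, List.any_eq_true] at hst
  rcases hst with hst | ⟨t, ht, hst⟩
  · have := hm.lambdaVal_le hα.binary (by norm_num) hst
    push_cast at this
    exact absurd hk this.not_gt
  · refine ⟨t, ht, ?_⟩
    rcases Bool.or_eq_true _ _ ▸ hst with hst | hst
    · exact Or.inl (hm.of_extendsWindows hst)
    · exact Or.inr (hm.of_extendsWindows hst).reflect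

lemma Good.lambdaVal_le_of_lowWindows {α : ℤ → ℕ} (hα : Good α) {k : ℤ}
    (h : Matches α k lowWindows.1 2 lowWindows.2) :
    lambdaVal α k ≤ (58473 - 745 * √210) / 15422 := by
  obtain ⟨hc, hL, hR⟩ := h
  have h1 := hα.tailVal_right_le (k := k) (binary_evPer (by decide) (by decide))
    (fun n hn => evPer_add_length (by simp; omega)) devCheck_lowRight
    (fun i hi => pre_map_range.1 hR i (by omega))
  have h2 := hα.reflect.tailVal_right_le (k := -k) (binary_evPer (by decide) (by decide))
    (fun n hn => evPer_add_length (by simp; omega)) devCheck_lowLeft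
    (fun i hi => by
      rw [right_reflect, neg_neg]
      exact pre_map_range.1 hL i (by omega))
  rw [right_reflect, neg_neg] at h2
  rw [lambdaVal_eq hα.binary.pos, hc, ← low_value]
  push_cast
  linarith

lemma tailVal_of_three_twos {s : ℕ → ℕ} (hs : ∀ n, 0 < s n) (h0 : s 0 = 2) (h1 : s 1 = 2)
    (h2 : s 2 = 2) : tailVal s = threeTwos (tailVal fun n => s (n + 3)) := by
  rw [tailVal_eq hs, tailVal_eq (s := fun n => s (n + 1)) (fun n => hs _),
    tailVal_eq (s := fun n => s (n + 1 + 1)) (fun n => hs _)]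
  simp only [zero_add, h0, h1, h2, Nat.reduceAdd, threeTwos, Nat.cast_ofNat, add_assoc]

lemma Good.exists_le_lambdaVal_of_highWindows {α : ℤ → ℕ} (hα : Good α) {k : ℤ}
    (h : Matches α k highWindows.1 2 highWindows.2) :
    ∃ j, (1341491634738 + 14336533 * √210) / 430566005892 ≤ lambdaVal α j := by
  obtain ⟨hc, hL, hR⟩ := h
  have hL' := pre_map_range.1 hL
  have hR' := pre_map_range.1 hR
  have hb : Binary (hexTail [1, 2, 2, 1, 2, 2, 1, 1]) := binary_evPer (by decide) (by decide)
  have hper : ∀ n, 8 ≤ n → hexTail [1, 2, 2, 1, 2, 2, 1, 1] (n + 6)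
      = hexTail [1, 2, 2, 1, 2, 2, 1, 1] n := fun n hn => evPer_add_length (by simp; omega)
  have hx := hα.le_tailVal_right (k := k) hb hper devCheck_highRight
    (fun i hi => hR' i (by omega))
  have hy := hα.reflect.le_tailVal_right (k := -(k - 3)) hb hper devCheck_highRight (by
    intro i hi
    rw [right_reflect, neg_neg]
    have := hL' (i + 1 + 1 + 1) (by omega)
    rw [hexTail_cons_succ, hexTail_cons_succ, hexTail_cons_succ] at this
    rw [← this]
    simp only [left]
    congr 1
    push_cast
    ring)
  rw [right_reflect, neg_neg] at hy
  have h0 : left α k 0 = 2 := hL' 0 (by omega)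
  have h1 : left α k 1 = 2 := hL' 1 (by omega)
  have h2 : left α k 2 = 2 := hL' 2 (by omega)
  have eL : tailVal (left α k) = threeTwos (tailVal (left α (k - 3))) := by
    rw [tailVal_of_three_twos (hα.binary.left k).pos h0 h1 h2]
    congr 2
    funext n
    simp only [left]
    congr 1
    push_cast
    ring
  have eR : tailVal (right α (k - 3)) = threeTwos (tailVal (right α k)) := by
    rw [tailVal_of_three_twos (hα.binary.right _).pos]
    · congr 2
      funext n
      simp only [right]
      congr 1
      push_cast
      ring
    · refine Eq.trans ?_ h1
      simp only [right, left]
      congr 1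
      push_cast
      ring
    · refine Eq.trans ?_ h0
      simp only [right, left]
      congr 1
      push_cast
      ring
    · refine Eq.trans ?_ hc
      simp only [right]
      congr 1
      push_cast
      ring
  have hv := high_value
  have hr := tailVal_pos hb.pos
  rcases le_total (tailVal (left α (k - 3))) (tailVal (right α k)) with hle | hle
  · refine ⟨k, ?_⟩
    have := add_threeTwos_le hr.le hy
    rw [lambdaVal_eq hα.binary.pos, hc, eL]
    push_cast
    linarith
  · refine ⟨k - 3, ?_⟩
    have := add_threeTwos_le hr.le hx
    have h3 : α (k - 3) = 2 := by
      refine Eq.trans ?_ h2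
      simp only [left]
      congr 1
      push_cast
      ring
    rw [lambdaVal_eq hα.binary.pos, h3, eR]
    push_cast
    linarith

/-! ### The isolated point -/

/-- The periodic sequence realising the isolated point. -/
def isolatedSeq (n : ℤ) : ℕ := [2, 1, 2, 2, 1, 2, 2, 2].getD (n % 8).toNat 1

lemma isolatedSeq_emod (n : ℤ) : isolatedSeq (n % 8) = isolatedSeq n := by
  rw [isolatedSeq, Int.emod_emod_of_dvd _ dvd_rfl, isolatedSeq]

lemma Good.isolated_add {α : ℤ → ℕ} (hα : Good α) {k : ℤ}
    (h : Matches α k isolatedWindows.1 2 isolatedWindows.2) :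
    Matches α (k + 8) isolatedWindows.1 2 isolatedWindows.2 := by
  have h' : Matches α k isolatedWindows.1 2 [1, 2, 2, 1, 2, 2, 2, 2, 1, 2, 2, 1] := h
  have h8 := h'.moveRight.moveRight.moveRight.moveRight.moveRight.moveRight.moveRight.moveRight
  simp only [add_assoc, Int.reduceAdd] at h8
  obtain ⟨L, R, hm, hs⟩ := hα.exists_accept h8 search_isolated_add
  exact hm.of_extendsWindows hs

lemma Good.isolated_sub {α : ℤ → ℕ} (hα : Good α) {k : ℤ}
    (h : Matches α k isolatedWindows.1 2 isolatedWindows.2) :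
    Matches α (k - 8) isolatedWindows.1 2 isolatedWindows.2 := by
  have h' : Matches (MarkovGap.reflect α) (-k) isolatedWindows.2 2
    [2, 2, 2, 1, 2, 2, 1, 2, 2, 2, 2, 1] := h.reflect
  have h8 := h'.moveRight.moveRight.moveRight.moveRight.moveRight.moveRight.moveRight.moveRight
  simp only [add_assoc, Int.reduceAdd] at h8
  have h8' := h8.reflect
  have e : MarkovGap.reflect (MarkovGap.reflect α) = α := by
    funext n
    simp [MarkovGap.reflect]
  rw [e, show -(-k + 8) = k - 8 by ring] at h8'
  obtain ⟨L, R, hm, hs⟩ := hα.exists_accept h8' search_isolated_sub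
  exact hm.of_extendsWindows hs

lemma Good.eq_isolatedSeq {α : ℤ → ℕ} (hα : Good α) {k : ℤ}
    (h : Matches α k isolatedWindows.1 2 isolatedWindows.2) :
    (fun n => α (k + n)) = isolatedSeq := by
  have hall (m : ℤ) : Matches α (k + 8 * m) isolatedWindows.1 2 isolatedWindows.2 := by
    induction m using Int.induction_on with
    | zero => simpa using h
    | succ i ih =>
      have := hα.isolated_add ih
      rwa [show k + 8 * (i : ℤ) + 8 = k + 8 * (i + 1) by ring] at this
    | pred i ih =>
      have := hα.isolated_sub ih
      rwa [show k + 8 * (-(i : ℤ)) - 8 = k + 8 * (-i - 1) by ring] at this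
  funext n
  obtain ⟨hc, -, hR⟩ := hall (n / 8)
  have hR' := pre_map_range.1 hR
  have hlt := Int.emod_lt_of_pos n (by norm_num : (0 : ℤ) < 8)
  have hnn := Int.emod_nonneg n (by norm_num : (8 : ℤ) ≠ 0)
  have hn := Int.mul_ediv_add_emod n 8
  rw [← isolatedSeq_emod]
  obtain ⟨i, hi⟩ := Int.eq_ofNat_of_zero_le hnn
  rw [hi] at hlt hn ⊢
  rw [show k + n = k + 8 * (n / 8) + i by linarith]
  rcases i with _ | i
  · rw [Nat.cast_zero, add_zero, hc]
    rfl
  · have := hR' i (by omega)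
    simp only [right] at this
    rw [show k + 8 * (n / 8) + ((i + 1 : ℕ) : ℤ) = k + 8 * (n / 8) + 1 + i by push_cast; ring, this]
    have : i < 7 := by omega
    interval_cases i <;> rfl

/-! ### Sequences realising prescribed values -/

/-- The windows of radius twelve around position `j` force `λ ≤ p / q`. -/
def upCheck (p q : ℕ) (α : ℤ → ℕ) (j : ℤ) : Bool :=
  windowLe p q (window (left α j)) (α j) (window (right α j))

lemma lambdaVal_le_of_upCheck {α : ℤ → ℕ} (hα : Binary α) {p q : ℕ} (hq : 0 < q) {j : ℤ}
    (h : upCheck p q α j = true) : lambdaVal α j ≤ p / q :=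
  Matches.lambdaVal_le hα hq
    ⟨rfl, pre_map_range.2 fun _ _ => rfl, pre_map_range.2 fun _ _ => rfl⟩ h

lemma upCheck_congr {α : ℤ → ℕ} {p q : ℕ} {j j' : ℤ}
    (h : ∀ i : ℤ, -12 ≤ i → i ≤ 12 → α (j + i) = α (j' + i)) :
    upCheck p q α j = upCheck p q α j' := by
  have e1 : window (left α j) = window (left α j') := by
    refine List.map_congr_left fun i hi => ?_
    have := List.mem_range.1 hi
    have := h (-1 - i) (by omega) (by omega)
    simp only [left]
    convert this using 2 <;> ring
  have e2 : window (right α j) = window (right α j') := by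
    refine List.map_congr_left fun i hi => ?_
    have := List.mem_range.1 hi
    have := h (1 + i) (by omega) (by omega)
    simp only [right]
    convert this using 2 <;> ring
  have e3 : α j = α j' := by simpa using h 0 (by norm_num) (by norm_num)
  rw [upCheck, e1, e2, e3, upCheck]

lemma mem_markovSpectrum_of_max {α : ℤ → ℕ} (hα : ∀ n, 0 < α n) {k : ℤ}
    (h : ∀ j, lambdaVal α j ≤ lambdaVal α k) :
    markovValue α = lambdaVal α k ∧ lambdaVal α k ∈ markovSpectrum := by
  have hb : BddAbove (range (lambdaVal α)) := ⟨lambdaVal α k, by rintro _ ⟨j, rfl⟩; exact h j⟩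
  have e : markovValue α = lambdaVal α k := le_antisymm (ciSup_le h) (le_ciSup hb k)
  exact ⟨e, α, hα, hb, e⟩

lemma binary_isolatedSeq : Binary isolatedSeq := by
  intro n
  rw [← isolatedSeq_emod]
  have hlt := Int.emod_lt_of_pos n (by norm_num : (0 : ℤ) < 8)
  have hnn := Int.emod_nonneg n (by norm_num : (8 : ℤ) ≠ 0)
  interval_cases n % 8 <;> decide

lemma isolatedSeq_symm (n : ℤ) : isolatedSeq (5 - n) = isolatedSeq n := by
  rw [← isolatedSeq_emod, ← isolatedSeq_emod n, Int.sub_emod]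
  have hlt := Int.emod_lt_of_pos n (by norm_num : (0 : ℤ) < 8)
  have hnn := Int.emod_nonneg n (by norm_num : (8 : ℤ) ≠ 0)
  interval_cases n % 8 <;> decide

lemma lambdaVal_isolatedSeq_zero : lambdaVal isolatedSeq 0 = √233285 / 155 := by
  have eR : right isolatedSeq 0 = evPer [] [1, 2, 2, 1, 2, 2, 2, 2] := by
    funext n
    have h : (1 + (n : ℤ)) % 8 = (1 + ((n % 8 : ℕ) : ℤ)) % 8 := by omega
    simp only [right, evPer, isolatedSeq, h, List.length_nil, not_lt_zero, if_false, Nat.sub_zero,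
      List.length_cons, Nat.reduceAdd, zero_add]
    have := Nat.mod_lt n (by norm_num : 0 < 8)
    interval_cases n % 8 <;> rfl
  have eL : left isolatedSeq 0 = evPer [] [2, 2, 2, 1, 2, 2, 1, 2] := by
    funext n
    have h : (0 - 1 - (n : ℤ)) % 8 = (-1 - ((n % 8 : ℕ) : ℤ)) % 8 := by omega
    simp only [left, evPer, isolatedSeq, h, List.length_nil, not_lt_zero, if_false, Nat.sub_zero,
      List.length_cons, Nat.reduceAdd, zero_add]
    have := Nat.mod_lt n (by norm_num : 0 < 8)
    interval_cases n % 8 <;> rfl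
  rw [lambdaVal_eq binary_isolatedSeq.pos, eR, eL, tailVal_isolatedRight, tailVal_isolatedLeft,
    show isolatedSeq 0 = 2 from rfl]
  push_cast
  ring

lemma lambdaVal_isolatedSeq_le (j : ℤ) : lambdaVal isolatedSeq j ≤ lambdaVal isolatedSeq 0 := by
  have hj : lambdaVal isolatedSeq j = lambdaVal isolatedSeq (j % 8) := by
    have e : (fun n => isolatedSeq (8 * (j / 8) + n)) = isolatedSeq := by
      funext n
      rw [← isolatedSeq_emod, Int.mul_add_emod_self_left, isolatedSeq_emod]
    conv_lhs => rw [← Int.mul_ediv_add_emod j 8, ← lambdaVal_shift, e]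
  rw [hj]
  have hup : ∀ i : Fin 8, i = 0 ∨ i = 5 ∨
      upCheck 3116 1000 isolatedSeq ((i : ℕ) : ℤ) = true := by
    decide +kernel
  have hlt := Int.emod_lt_of_pos j (by norm_num : (0 : ℤ) < 8)
  have hnn := Int.emod_nonneg j (by norm_num : (8 : ℤ) ≠ 0)
  obtain ⟨i, hi⟩ := Int.eq_ofNat_of_zero_le hnn
  rw [hi] at hlt ⊢
  rcases hup ⟨i, by omega⟩ with h | h | h
  · simp only [Fin.ext_iff] at h
    simp at h
    rw [h]
    rfl
  · simp only [Fin.ext_iff] at h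
    have h' : i = 5 := h
    subst h'
    exact (lambdaVal_of_symm binary_isolatedSeq.pos isolatedSeq_symm 0).le
  · refine (lambdaVal_le_of_upCheck binary_isolatedSeq (by norm_num) h).trans ?_
    rw [lambdaVal_isolatedSeq_zero]
    push_cast
    linarith [sqrt_isolated_gt]

/-- The sequence with `c` at the origin, `r` to the right and `l` to the left. -/
def biSeq (l : ℕ → ℕ) (c : ℕ) (r : ℕ → ℕ) : ℤ → ℕ
  | Int.ofNat 0 => c
  | Int.ofNat (n + 1) => r n
  | Int.negSucc n => l n

lemma right_biSeq (l : ℕ → ℕ) (c : ℕ) (r : ℕ → ℕ) : right (biSeq l c r) 0 = r := by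
  funext n
  rw [right, show (0 + 1 + (n : ℤ)) = Int.ofNat (n + 1) by simp; ring]
  rfl

lemma left_biSeq (l : ℕ → ℕ) (c : ℕ) (r : ℕ → ℕ) : left (biSeq l c r) 0 = l := by
  funext n
  rw [left, show (0 - 1 - (n : ℤ)) = Int.negSucc n by rw [Int.negSucc_eq]; ring]
  rfl

lemma biSeq_natCast_succ (l : ℕ → ℕ) (c : ℕ) (r : ℕ → ℕ) (n : ℕ) :
    biSeq l c r ((n + 1 : ℕ) : ℤ) = r n := rfl

lemma binary_biSeq {l r : ℕ → ℕ} (hl : Binary l) (hr : Binary r) : Binary (biSeq l 2 r) := by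
  rintro ((_ | n) | n)
  · exact Or.inr rfl
  · exact hr n
  · exact hl n

lemma lambdaVal_biSeq_zero {l r : ℕ → ℕ} (hl : Binary l) (hr : Binary r) :
    lambdaVal (biSeq l 2 r) 0 = 2 + tailVal r + tailVal l := by
  rw [lambdaVal_eq (binary_biSeq hl hr).pos, right_biSeq, left_biSeq]
  rfl

lemma upCheck_biSeq {l r : ℕ → ℕ} {c p q : ℕ} (hper : ∀ n, 8 ≤ n → r (n + 6) = r n)
    (h : ∀ i < 28, upCheck p q (biSeq l c r) ((i + 3 : ℕ) : ℤ) = true) {n : ℕ} (hn : 3 ≤ n) :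
    upCheck p q (biSeq l c r) (n : ℤ) = true := by
  induction n using Nat.strong_induction_on with
  | _ n ih =>
    by_cases h1 : n < 31
    · have := h (n - 3) (by omega)
      rwa [Nat.sub_add_cancel hn] at this
    · rw [← ih (n - 6) (by omega) (by omega)]
      refine upCheck_congr fun i hi hi' => ?_
      obtain ⟨m, hm⟩ := Int.eq_ofNat_of_zero_le (show 0 ≤ (n : ℤ) + i - 7 by omega)
      rw [show (n : ℤ) + i = ((m + 6 + 1 : ℕ) : ℤ) by push_cast; omega,
        show ((n - 6 : ℕ) : ℤ) + i = ((m + 1 : ℕ) : ℤ) by omega,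
        biSeq_natCast_succ, biSeq_natCast_succ, hper _ (by omega)]

/-- The sequence realising the lower endpoint. -/
def lowSeq : ℤ → ℕ := biSeq (hexTail [2, 1, 1]) 2 (hexTail [1, 2, 2, 1, 1])

/-- The sequence realising the upper endpoint. -/
def highSeq : ℤ → ℕ :=
  biSeq (hexTail [2, 2, 2, 1, 2, 2, 1, 2, 2, 1, 1]) 2 (hexTail [1, 2, 2, 1, 2, 2, 1, 1])

lemma binary_lowSeq : Binary lowSeq :=
  binary_biSeq (binary_evPer (by decide) (by decide)) (binary_evPer (by decide) (by decide))

lemma binary_highSeq : Binary highSeq :=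
  binary_biSeq (binary_evPer (by decide) (by decide)) (binary_evPer (by decide) (by decide))

lemma biSeq_symm_of_nonneg {l r : ℕ → ℕ} {c : ℕ} {s : ℤ}
    (h : ∀ n : ℤ, s ≤ 2 * n → biSeq l c r (s - n) = biSeq l c r n) (n : ℤ) :
    biSeq l c r (s - n) = biSeq l c r n := by
  by_cases hn : s ≤ 2 * n
  · exact h n hn
  · rw [← h (s - n) (by omega), sub_sub_cancel]

lemma lowSeq_symm (n : ℤ) : lowSeq (2 - n) = lowSeq n := by
  refine biSeq_symm_of_nonneg (fun n hn => ?_) n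
  obtain ⟨m, rfl⟩ := Int.eq_ofNat_of_zero_le (show 0 ≤ n by omega)
  rcases m with _ | _ | _ | m
  · rfl
  · rfl
  · rfl
  · rw [show 2 - ((m + 1 + 1 + 1 : ℕ) : ℤ) = Int.negSucc m by rw [Int.negSucc_eq]; push_cast; ring,
      biSeq_natCast_succ, hexTail_cons_succ, hexTail_cons_succ]
    rfl

lemma highSeq_symm (n : ℤ) : highSeq (-3 - n) = highSeq n := by
  refine biSeq_symm_of_nonneg (fun n hn => ?_) n
  obtain ⟨m, hm⟩ := Int.eq_ofNat_of_zero_le (show 0 ≤ n + 1 by omega)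
  obtain rfl : n = m - 1 := by omega
  rcases m with _ | _ | m
  · rfl
  · rfl
  · rw [show -3 - (((m + 1 + 1 : ℕ) : ℤ) - 1) = Int.negSucc (m + 1 + 1 + 1) by
      rw [Int.negSucc_eq]; push_cast; ring,
      show (((m + 1 + 1 : ℕ) : ℤ) - 1) = ((m + 1 : ℕ) : ℤ) by push_cast; ring, biSeq_natCast_succ]
    simp only [biSeq, hexTail_cons_succ]

lemma lambdaVal_lowSeq_zero : lambdaVal lowSeq 0 = (58473 - 745 * √210) / 15422 := by
  rw [← low_value]
  exact lambdaVal_biSeq_zero (binary_evPer (by decide) (by decide))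
    (binary_evPer (by decide) (by decide))

lemma lambdaVal_highSeq_zero :
    lambdaVal highSeq 0 = (1341491634738 + 14336533 * √210) / 430566005892 := by
  rw [← high_value, highSeq, lambdaVal_biSeq_zero (binary_evPer (by decide) (by decide))
    (binary_evPer (by decide) (by decide))]
  congr 1
  have hb : Binary (hexTail [2, 2, 2, 1, 2, 2, 1, 2, 2, 1, 1]) :=
    binary_evPer (by decide) (by decide)
  rw [tailVal_of_three_twos hb.pos rfl rfl rfl]
  congr 2
  funext n
  exact (hexTail_cons_succ _ _ (n + 1 + 1)).trans
    ((hexTail_cons_succ _ _ (n + 1)).trans (hexTail_cons_succ _ _ n))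

lemma low_gt : 3091487765 / 1000000000 < (58473 - 745 * √210) / 15422 := by
  linarith [sqrt_two_hundred_ten_lt]

lemma high_lt : (1341491634738 + 14336533 * √210) / 430566005892 < 3116129403 / 1000000000 := by
  linarith [sqrt_two_hundred_ten_lt]

lemma lambdaVal_lowSeq_le (j : ℤ) : lambdaVal lowSeq j ≤ lambdaVal lowSeq 0 := by
  have key (j : ℤ) (hj : 1 ≤ j) : lambdaVal lowSeq j ≤ lambdaVal lowSeq 0 := by
    obtain ⟨n, rfl⟩ := Int.eq_ofNat_of_zero_le (show 0 ≤ j by omega)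
    by_cases h2 : n = 2
    · subst h2
      exact (lambdaVal_of_symm binary_lowSeq.pos lowSeq_symm 0).le
    have hup : upCheck 3091487765 1000000000 lowSeq (n : ℤ) = true := by
      by_cases h3 : 3 ≤ n
      · exact upCheck_biSeq (fun n hn => evPer_add_length (by simp; omega))
          (by decide +kernel) h3
      · obtain rfl : n = 1 := by omega
        decide +kernel
    refine (lambdaVal_le_of_upCheck binary_lowSeq (by norm_num) hup).trans ?_
    rw [lambdaVal_lowSeq_zero]
    push_cast
    exact low_gt.le
  by_cases hj : 1 ≤ j
  · exact key j hj
  · rw [← lambdaVal_of_symm binary_lowSeq.pos lowSeq_symm]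
    exact key _ (by omega)

lemma lambdaVal_highSeq_le (j : ℤ) : lambdaVal highSeq j ≤ lambdaVal highSeq 0 := by
  have key (j : ℤ) (hj : -1 ≤ j) : lambdaVal highSeq j ≤ lambdaVal highSeq 0 := by
    by_cases h0 : j = 0
    · rw [h0]
    have hup : upCheck 31161 10000 highSeq j = true := by
      by_cases h3 : 3 ≤ j
      · obtain ⟨n, rfl⟩ := Int.eq_ofNat_of_zero_le (show 0 ≤ j by omega)
        exact upCheck_biSeq (fun n hn => evPer_add_length (by simp; omega))
          (by decide +kernel) (by omega)
      · have : j = -1 ∨ j = 1 ∨ j = 2 := by omega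
        rcases this with rfl | rfl | rfl <;> decide +kernel
    refine (lambdaVal_le_of_upCheck binary_highSeq (by norm_num) hup).trans ?_
    rw [lambdaVal_highSeq_zero]
    push_cast
    linarith [sqrt_two_hundred_ten_gt]
  by_cases hj : -1 ≤ j
  · exact key j hj
  · rw [← lambdaVal_of_symm binary_highSeq.pos highSeq_symm]
    exact key _ (by omega)

/-! ### The gap -/

lemma binary_of_lambdaVal_lt {α : ℤ → ℕ} (hα : ∀ n, 0 < α n)
    (h : ∀ k, lambdaVal α k < 7 / 2) : Binary α := by
  have h3 (k : ℤ) : α k ≤ 3 := by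
    have := h k
    rw [lambdaVal_eq hα] at this
    have h1 := tailVal_pos (s := right α k) (fun n => hα _)
    have h2 := tailVal_pos (s := left α k) (fun n => hα _)
    have h4 : (α k : ℝ) < 4 := by linarith
    have : α k < 4 := by exact_mod_cast h4
    omega
  have quarter {s : ℕ → ℕ} (hs : ∀ n, 0 < s n) (h0 : s 0 ≤ 3) : 1 / 4 ≤ tailVal s := by
    rw [tailVal_eq hs]
    have h1 := tailVal_pos (s := fun n => s (n + 1)) (fun n => hs _)
    have h2 := tailVal_le_one (s := fun n => s (n + 1)) (fun n => hs _)
    have h3 : (s 0 : ℝ) ≤ 3 := by exact_mod_cast h0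
    exact one_div_le_one_div_of_le (by positivity) (by linarith)
  intro k
  have h1 := quarter (s := right α k) (fun n => hα _) (h3 _)
  have h2 := quarter (s := left α k) (fun n => hα _) (h3 _)
  have h4 := h k
  rw [lambdaVal_eq hα] at h4
  have h5 : (α k : ℝ) < 3 := by linarith
  have h6 : α k < 3 := by exact_mod_cast h5
  have := hα k
  omega

lemma markovValue_isolatedSeq : markovValue isolatedSeq = √233285 / 155 := by
  rw [(mem_markovSpectrum_of_max binary_isolatedSeq.pos lambdaVal_isolatedSeq_le).1,
    lambdaVal_isolatedSeq_zero]

lemma markovValue_of_isolatedWindows {α : ℤ → ℕ} (hα : Good α) {k : ℤ}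
    (h : Matches α k isolatedWindows.1 2 isolatedWindows.2) :
    markovValue α = √233285 / 155 := by
  rw [← markovValue_isolatedSeq, ← hα.eq_isolatedSeq h]
  unfold markovValue
  simp only [lambdaVal_shift]
  exact ((Equiv.addLeft k).iSup_comp (g := lambdaVal α)).symm

lemma markovValue_eq_of_mem_Ioo {α : ℤ → ℕ} (hα : ∀ n, 0 < α n)
    (hb : BddAbove (range (lambdaVal α)))
    (hm : markovValue α ∈ Ioo ((58473 - 745 * √210) / 15422)
      ((1341491634738 + 14336533 * √210) / 430566005892)) :
    markovValue α = √233285 / 155 := by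
  have hlt (j : ℤ) : lambdaVal α j < (1341491634738 + 14336533 * √210) / 430566005892 :=
    (le_ciSup hb j).trans_lt hm.2
  have hgood : Good α :=
    ⟨binary_of_lambdaVal_lt hα fun j => by linarith [hlt j, high_lt],
      fun j => (hlt j).trans high_lt⟩
  have hlt' (j : ℤ) : lambdaVal (reflect α) j
      < (1341491634738 + 14336533 * √210) / 430566005892 := by
    rw [lambdaVal_reflect hα]
    exact hlt _
  obtain ⟨k, hk⟩ := exists_lt_of_lt_ciSup hm.1
  obtain ⟨t, ht, hmatch⟩ := hgood.classification k (low_gt.trans hk)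
  simp only [List.mem_cons, List.not_mem_nil, or_false] at ht
  rcases hmatch with hmatch | hmatch <;> rcases ht with rfl | rfl | rfl
  · exact absurd hk (hgood.lambdaVal_le_of_lowWindows hmatch).not_gt
  · obtain ⟨j, hj⟩ := hgood.exists_le_lambdaVal_of_highWindows hmatch
    exact absurd (hlt j) hj.not_gt
  · exact markovValue_of_isolatedWindows hgood hmatch
  · have := hgood.reflect.lambdaVal_le_of_lowWindows hmatch
    rw [lambdaVal_reflect hα, neg_neg] at this
    exact absurd hk this.not_gt
  · obtain ⟨j, hj⟩ := hgood.reflect.exists_le_lambdaVal_of_highWindows hmatch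
    exact absurd (hlt' j) hj.not_gt
  · rw [← markovValue_reflect hα]
    exact markovValue_of_isolatedWindows hgood.reflect hmatch

end MarkovGap

open MarkovGap in
/-- The intersection of the Markov spectrum with the open interval consists of
exactly one (hence isolated) point, and both endpoints belong to the Markov
spectrum. -/
theorem markov_gap_7 :
    markovSpectrum ∩ Ioo ((58473 - 745 * Real.sqrt 210) / 15422) ((1341491634738 + 14336533 * Real.sqrt 210) / 430566005892) = {(Real.sqrt 233285 / 155 : ℝ)} ∧
    ((58473 - 745 * Real.sqrt 210) / 15422) ∈ markovSpectrum ∧ ((1341491634738 + 14336533 * Real.sqrt 210) / 430566005892) ∈ markovSpectrum := by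
  refine ⟨Subset.antisymm ?_ ?_, ?_, ?_⟩
  · rintro _ ⟨⟨α, hα, hb, rfl⟩, hm⟩
    exact markovValue_eq_of_mem_Ioo hα hb hm
  · rintro _ rfl
    refine ⟨?_, ?_, ?_⟩
    · rw [← lambdaVal_isolatedSeq_zero]
      exact (mem_markovSpectrum_of_max binary_isolatedSeq.pos lambdaVal_isolatedSeq_le).2
    · linarith [sqrt_isolated_gt, sqrt_two_hundred_ten_gt]
    · linarith [sqrt_isolated_lt, sqrt_two_hundred_ten_gt]
  · rw [← lambdaVal_lowSeq_zero]
    exact (mem_markovSpectrum_of_max binary_lowSeq.pos lambdaVal_lowSeq_le).2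
  · rw [← lambdaVal_highSeq_zero]
    exact (mem_markovSpectrum_of_max binary_highSeq.pos lambdaVal_highSeq_le).2
end
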